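/- arXiv:1703.09531 — 2 statements merged into one kernel-verified Lean document; each statement's English description precedes it below -/
import Mathlib

section
/- Let f₀ ∈ F_{α,β} for some α > 0, β ∈ ℝ. For every n ≥ n₀, where n₀ is an integer depending only on α and β, there exists a log-concave density f̄ₙ supported on [−(8/(5α)) log n, (8/(5α)) log n] that is piecewise log-linear with O(n^{1/5} log n) knots (the implied constant depending only on α, β) and satisfies h²(f₀, f̄ₙ) ≤ C(α,β) (log n)² n^{−4/5} for a constant C(α,β) depending only on α and β. Moreover, the knots may be taken to be c n^{−6/5} log n-separated for some universal constant c > 0. -/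
open MeasureTheory Real Set

/-- A probability density on ℝ: measurable, nonnegative, integrating to one. -/
def IsDensityFn (f : ℝ → ℝ) : Prop :=
  Measurable f ∧ (∀ x, 0 ≤ f x) ∧ ∫ x, f x = 1

/-- Log-concavity of a nonnegative function (multiplicative form, allowing zeros). -/
def IsLogConcaveFn (f : ℝ → ℝ) : Prop :=
  ∀ x y t : ℝ, 0 ≤ t → t ≤ 1 →
    f x ^ t * f y ^ (1 - t) ≤ f (t * x + (1 - t) * y)

/-- Membership in `F_{α,β}`: an upper semi-continuous log-concave probability density
with the envelope bound `f x ≤ e^{β − α|x|}`. -/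
def MemF (α β : ℝ) (f : ℝ → ℝ) : Prop :=
  IsDensityFn f ∧ UpperSemicontinuous f ∧ IsLogConcaveFn f ∧
    ∀ x : ℝ, f x ≤ Real.exp (β - α * |x|)

/-- The squared Hellinger distance between two densities on ℝ. -/
noncomputable def hellingerSq (p q : ℝ → ℝ) : ℝ :=
  ∫ x, (Real.sqrt (p x) - Real.sqrt (q x)) ^ 2


/-!
On the window `[-L, L]`, replace `log f` by its smallest `K`-Lipschitz majorant `w`, which is again
concave. It differs from `log f` only where the slope of `log f` exceeds `K` in absolute value, i.e.
near the two ends of the support, which costs `O(1 / K)` in mass. Then interpolate `w` linearly at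
points of a `δ`-lattice, with a new knot whenever the length of the graph of `w` (clipped from below
at `τ`) has grown by `ρ`, or `arsinh` of the slope has dropped by `η`. Measuring slopes on the
hyperbolic scale makes the interpolation error `O(η ρ)` uniformly in the slope, with only
`O(arsinh K / η)` knots caused by slope changes. The lattice yields the separation, and below the
level `e ^ τ` only a mass of order `e ^ τ * L` is neglected. Normalizing the resulting function at
most doubles the squared Hellinger distance.

The scales are `L = 8 / (5 * α) * log n`, `K = n ^ (4/5)`, `η = n ^ (-1/5)`,
`ρ = n ^ (-1/5) * log n`, `τ = -log n` and `δ = n ^ (-6/5) * log n`.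
-/

/-! ### Log-concave functions -/

namespace IsLogConcaveFn

variable {f g : ℝ → ℝ}

theorem mul (hf : IsLogConcaveFn f) (hg : IsLogConcaveFn g) (hf0 : ∀ x, 0 ≤ f x)
    (hg0 : ∀ x, 0 ≤ g x) : IsLogConcaveFn fun x ↦ f x * g x := by
  intro x y t ht0 ht1
  calc (f x * g x) ^ t * (f y * g y) ^ (1 - t)
      = (f x ^ t * f y ^ (1 - t)) * (g x ^ t * g y ^ (1 - t)) := by
        rw [mul_rpow (hf0 x) (hg0 x), mul_rpow (hf0 y) (hg0 y)]; ring
    _ ≤ f (t * x + (1 - t) * y) * g (t * x + (1 - t) * y) :=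
        mul_le_mul (hf x y t ht0 ht1) (hg x y t ht0 ht1)
          (mul_nonneg (rpow_nonneg (hg0 x) _) (rpow_nonneg (hg0 y) _)) (hf0 _)

theorem quasiconcaveOn (hf : IsLogConcaveFn f) (hf0 : ∀ x, 0 ≤ f x) :
    QuasiconcaveOn ℝ univ f := by
  refine quasiconcaveOn_iff_min_le.2 ⟨convex_univ, fun x _ y _ a b ha hb hab ↦ ?_⟩
  obtain rfl : b = 1 - a := by linarith
  have hmin : 0 ≤ min (f x) (f y) := le_min (hf0 x) (hf0 y)
  calc min (f x) (f y) = min (f x) (f y) ^ a * min (f x) (f y) ^ (1 - a) := by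
        rw [← rpow_add_of_nonneg hmin ha hb, add_sub_cancel, rpow_one]
    _ ≤ f x ^ a * f y ^ (1 - a) := by
        gcongr
        · exact rpow_nonneg (hf0 x) a
        · exact min_le_left _ _
        · exact min_le_right _ _
    _ ≤ f (a • x + (1 - a) • y) := hf x y a ha (by linarith)

theorem concaveOn_log (hf : IsLogConcaveFn f) (hpos : ∀ x, 0 < f x) :
    ConcaveOn ℝ univ fun x ↦ log (f x) := by
  refine ⟨convex_univ, fun x _ y _ a b ha hb hab ↦ ?_⟩
  obtain rfl : b = 1 - a := by linarith
  have hx := rpow_pos_of_pos (hpos x) a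
  have hy := rpow_pos_of_pos (hpos y) (1 - a)
  calc a * log (f x) + (1 - a) * log (f y) = log (f x ^ a * f y ^ (1 - a)) := by
        rw [log_mul hx.ne' hy.ne', log_rpow (hpos x), log_rpow (hpos y)]
    _ ≤ log (f (a * x + (1 - a) * y)) :=
        log_le_log (mul_pos hx hy) (hf x y a ha (by linarith))

end IsLogConcaveFn

theorem isLogConcaveFn_exp {φ : ℝ → ℝ} (hφ : ConcaveOn ℝ univ φ) :
    IsLogConcaveFn fun x ↦ exp (φ x) := by
  intro x y t ht0 ht1
  rw [← exp_mul, ← exp_mul, ← exp_add, exp_le_exp]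
  have h := hφ.2 (mem_univ x) (mem_univ y) ht0 (sub_nonneg.2 ht1) (add_sub_cancel t 1)
  simp only [smul_eq_mul] at h
  linarith

theorem isLogConcaveFn_indicator_one {s : Set ℝ} (hs : Convex ℝ s) :
    IsLogConcaveFn (s.indicator 1) := by
  intro x y t ht0 ht1
  have h0 : ∀ x, 0 ≤ s.indicator (1 : ℝ → ℝ) x := indicator_nonneg fun _ _ ↦ zero_le_one
  rcases ht0.eq_or_lt with rfl | ht0'
  · simp
  rcases ht1.eq_or_lt with rfl | ht1'
  · simp
  by_cases hx : x ∈ s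
  · by_cases hy : y ∈ s
    · have hxy : t * x + (1 - t) * y ∈ s :=
        hs hx hy ht0 (sub_nonneg.2 ht1) (add_sub_cancel t 1)
      simp [hx, hy, hxy]
    · simpa [hy, zero_rpow (sub_pos.2 ht1').ne'] using h0 _
  · simpa [hx, zero_rpow ht0'.ne'] using h0 _

/-! ### Log-Lipschitz envelope of a log-concave function -/

theorem upperSemicontinuous_mul_of_continuous_pos {X : Type*} [TopologicalSpace X] {f e : X → ℝ}
    (hf : UpperSemicontinuous f) (he : Continuous e) (hpos : ∀ x, 0 < e x) :
    UpperSemicontinuous fun x ↦ f x * e x := by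
  intro x c hc
  obtain ⟨c', hfc', hc'⟩ := exists_between ((lt_div_iff₀ (hpos x)).2 hc)
  have hnear : ∀ᶠ x' in nhds x, c' * e x' < c :=
    ((continuous_const.mul he).tendsto x).eventually_lt_const ((lt_div_iff₀ (hpos x)).1 hc')
  filter_upwards [hf x c' hfc', hnear] with x' hfx' hexp
  exact (mul_le_mul_of_nonneg_right hfx'.le (hpos x').le).trans_lt hexp

/-- The smallest function above `f` on `s` whose logarithm is `K`-Lipschitz: on the logarithmic
scale, the sup-convolution of `log f` restricted to `s` with `-K |·|`. The multiplicative form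
allows `f` to vanish. -/
noncomputable def lipEnvelope (K : ℝ) (s : Set ℝ) (f : ℝ → ℝ) (x : ℝ) : ℝ :=
  sSup ((fun y ↦ f y * exp (-(K * |x - y|))) '' s)

section LipEnvelope

variable {f : ℝ → ℝ} {s : Set ℝ} {A K x₀ : ℝ}

theorem exists_isMaxOn_mul_exp (hs : IsCompact s) (hne : s.Nonempty) (hf : UpperSemicontinuous f)
    {φ : ℝ → ℝ} (hφ : Continuous φ) : ∃ y ∈ s, IsMaxOn (fun y ↦ f y * exp (φ y)) s y :=
  UpperSemicontinuousOn.exists_isMaxOn hne hs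
    ((upperSemicontinuous_mul_of_continuous_pos hf (continuous_exp.comp hφ)
      fun _ ↦ exp_pos _).upperSemicontinuousOn s)

theorem isGreatest_lipEnvelope (K : ℝ) (hs : IsCompact s) (hne : s.Nonempty)
    (hf : UpperSemicontinuous f) (x : ℝ) :
    IsGreatest ((fun y ↦ f y * exp (-(K * |x - y|))) '' s) (lipEnvelope K s f x) := by
  obtain ⟨y, hy, hmax⟩ := exists_isMaxOn_mul_exp hs hne hf
    (φ := fun y ↦ -(K * |x - y|)) (by fun_prop)
  have hgreatest : IsGreatest ((fun y ↦ f y * exp (-(K * |x - y|))) '' s)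
      (f y * exp (-(K * |x - y|))) :=
    ⟨mem_image_of_mem _ hy, forall_mem_image.2 fun _ hy' ↦ hmax hy'⟩
  rwa [lipEnvelope, hgreatest.csSup_eq]

theorem lipEnvelope_pos (hs : IsCompact s) (hf : UpperSemicontinuous f) (hx₀ : x₀ ∈ s)
    (hfx₀ : 0 < f x₀) (x : ℝ) : 0 < lipEnvelope K s f x :=
  (mul_pos hfx₀ (exp_pos _)).trans_le
    ((isGreatest_lipEnvelope K hs ⟨x₀, hx₀⟩ hf x).2 (mem_image_of_mem _ hx₀))

theorem lipEnvelope_le (hs : IsCompact s) (hne : s.Nonempty) (hf : UpperSemicontinuous f)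
    (hf0 : ∀ x, 0 ≤ f x) (hK : 0 ≤ K) (hA : ∀ x, f x ≤ A) (x : ℝ) : lipEnvelope K s f x ≤ A := by
  obtain ⟨y, -, hy⟩ := (isGreatest_lipEnvelope K hs hne hf x).1
  have hexp : exp (-(K * |x - y|)) ≤ 1 := exp_le_one_iff.2 (neg_nonpos.2 (by positivity))
  exact hy ▸ (mul_le_of_le_one_right (hf0 y) hexp).trans (hA y)

theorem le_lipEnvelope (hs : IsCompact s) (hf : UpperSemicontinuous f) {x : ℝ} (hx : x ∈ s) :
    f x ≤ lipEnvelope K s f x :=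
  (isGreatest_lipEnvelope K hs ⟨x, hx⟩ hf x).2 ⟨x, hx, by simp⟩

theorem isLogConcaveFn_lipEnvelope (hs : IsCompact s) (hconv : Convex ℝ s) (hne : s.Nonempty)
    (hf : UpperSemicontinuous f) (hlc : IsLogConcaveFn f) (hf0 : ∀ x, 0 ≤ f x) (hK : 0 ≤ K) :
    IsLogConcaveFn (lipEnvelope K s f) := by
  intro x₁ x₂ t ht0 ht1
  have hgreatest := isGreatest_lipEnvelope K hs hne hf
  obtain ⟨y₁, hy₁, hx₁⟩ := (hgreatest x₁).1
  obtain ⟨y₂, hy₂, hx₂⟩ := (hgreatest x₂).1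
  have hmem : t * y₁ + (1 - t) * y₂ ∈ s :=
    hconv hy₁ hy₂ ht0 (sub_nonneg.2 ht1) (add_sub_cancel t 1)
  have habs : |t * x₁ + (1 - t) * x₂ - (t * y₁ + (1 - t) * y₂)|
      ≤ t * |x₁ - y₁| + (1 - t) * |x₂ - y₂| :=
    calc _ = |t * (x₁ - y₁) + (1 - t) * (x₂ - y₂)| := by ring_nf
      _ ≤ |t * (x₁ - y₁)| + |(1 - t) * (x₂ - y₂)| := abs_add_le _ _
      _ = _ := by rw [abs_mul, abs_mul, abs_of_nonneg ht0, abs_of_nonneg (sub_nonneg.2 ht1)]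
  calc lipEnvelope K s f x₁ ^ t * lipEnvelope K s f x₂ ^ (1 - t)
      = (f y₁ ^ t * f y₂ ^ (1 - t)) * exp (-(K * (t * |x₁ - y₁| + (1 - t) * |x₂ - y₂|))) := by
        simp only [← hx₁, ← hx₂]
        rw [mul_rpow (hf0 _) (exp_pos _).le, mul_rpow (hf0 _) (exp_pos _).le, ← exp_mul,
          ← exp_mul, mul_mul_mul_comm, ← exp_add]
        ring_nf
    _ ≤ f (t * y₁ + (1 - t) * y₂) *
          exp (-(K * |t * x₁ + (1 - t) * x₂ - (t * y₁ + (1 - t) * y₂)|)) := by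
        gcongr
        · exact hf0 _
        · exact hlc y₁ y₂ t ht0 ht1
    _ ≤ lipEnvelope K s f (t * x₁ + (1 - t) * x₂) := (hgreatest _).2 (mem_image_of_mem _ hmem)

theorem abs_log_lipEnvelope_sub_le (hs : IsCompact s) (hf : UpperSemicontinuous f)
    (hf0 : ∀ x, 0 ≤ f x) (hK : 0 ≤ K) (hx₀ : x₀ ∈ s) (hfx₀ : 0 < f x₀) (x y : ℝ) :
    |log (lipEnvelope K s f x) - log (lipEnvelope K s f y)| ≤ K * |x - y| := by
  have hpos := lipEnvelope_pos (K := K) hs hf hx₀ hfx₀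
  have hmul (x y : ℝ) : lipEnvelope K s f x ≤ lipEnvelope K s f y * exp (K * |x - y|) := by
    obtain ⟨v, hv, hxv⟩ := (isGreatest_lipEnvelope K hs ⟨x₀, hx₀⟩ hf x).1
    have htri : |y - v| ≤ |x - y| + |x - v| := abs_sub_comm x y ▸ abs_sub_le y x v
    calc lipEnvelope K s f x = f v * exp (-(K * |x - v|)) := hxv.symm
      _ ≤ f v * exp (-(K * |y - v|) + K * |x - y|) := by
          gcongr
          · exact hf0 v
          · linarith [mul_le_mul_of_nonneg_left htri hK]
      _ = f v * exp (-(K * |y - v|)) * exp (K * |x - y|) := by rw [exp_add, mul_assoc]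
      _ ≤ lipEnvelope K s f y * exp (K * |x - y|) := by
          gcongr
          exact (isGreatest_lipEnvelope K hs ⟨x₀, hx₀⟩ hf y).2 (mem_image_of_mem _ hv)
  have hlog (x y : ℝ) : log (lipEnvelope K s f x) - log (lipEnvelope K s f y) ≤ K * |x - y| := by
    have h := log_le_log (hpos x) (hmul x y)
    rw [log_mul (hpos y).ne' (exp_pos _).ne', log_exp] at h
    linarith
  exact abs_sub_le_iff.2 ⟨hlog x y, abs_sub_comm x y ▸ hlog y x⟩

/- With `q` a maximizer of the log-concave function `y ↦ f y * exp (-(k * y))`, the point `x` either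
lies between `q` and `y`, where quasi-concavity applies, or sees `q` before `y`. -/
theorem exists_mul_exp_le_max (hs : IsCompact s) (hne : s.Nonempty) (hf : UpperSemicontinuous f)
    (hlc : IsLogConcaveFn f) (hf0 : ∀ x, 0 ≤ f x) (hA : ∀ x, f x ≤ A) (k : ℝ) :
    ∃ q, ∀ x, ∀ y ∈ s, 0 ≤ k * (y - x) →
      f y * exp (-(k * (y - x))) ≤ max (f x) (A * exp (-(|k| * |x - q|))) := by
  obtain ⟨q, -, hq⟩ := exists_isMaxOn_mul_exp hs hne hf (φ := fun y ↦ -(k * y)) (by fun_prop)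
  refine ⟨q, fun x y hy hxy ↦ ?_⟩
  have hshift (v : ℝ) : f v * exp (-(k * (v - x))) = f v * exp (-(k * v)) * exp (k * x) := by
    rw [mul_assoc, ← exp_add]; ring_nf
  have hyq : f y * exp (-(k * y)) ≤ f q * exp (-(k * q)) := hq hy
  rcases le_or_gt 0 (k * (q - x)) with hqx | hqx
  · have habs : |k| * |x - q| = k * (q - x) := by
      rw [abs_sub_comm, ← abs_mul, abs_of_nonneg hqx]
    refine le_max_of_le_right ?_
    calc f y * exp (-(k * (y - x))) ≤ f q * exp (-(k * (q - x))) := by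
          rw [hshift, hshift]; gcongr
      _ ≤ A * exp (-(|k| * |x - q|)) := by rw [habs]; gcongr; exact hA q
  · have hquasi : QuasiconcaveOn ℝ univ fun v ↦ f v * exp (-(k * v)) :=
      (hlc.mul (isLogConcaveFn_exp ((LinearMap.mulLeft ℝ (-k)).concaveOn convex_univ |>.congr
        fun v _ ↦ neg_mul k v)) hf0 fun _ ↦ (exp_pos _).le).quasiconcaveOn
          fun v ↦ mul_nonneg (hf0 v) (exp_pos _).le
    have hxseg : x ∈ segment ℝ q y := by
      rw [segment_eq_uIcc, mem_uIcc]
      rcases (show k ≠ 0 by rintro rfl; simp at hqx).lt_or_gt with hk | hk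
      · exact .inr ⟨by nlinarith, by nlinarith⟩
      · exact .inl ⟨by nlinarith, by nlinarith⟩
    have hGyx : f y * exp (-(k * y)) ≤ f x * exp (-(k * x)) :=
      ((hquasi (f y * exp (-(k * y)))).segment_subset ⟨mem_univ q, hyq⟩ ⟨mem_univ y, le_rfl⟩
        hxseg).2
    refine le_max_of_le_left ?_
    calc f y * exp (-(k * (y - x))) ≤ f x * exp (-(k * (x - x))) := by
          rw [hshift, hshift]; gcongr
      _ = f x := by simp

theorem exists_lipEnvelope_le_add (hs : IsCompact s) (hne : s.Nonempty)
    (hf : UpperSemicontinuous f) (hlc : IsLogConcaveFn f) (hf0 : ∀ x, 0 ≤ f x)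
    (hA : ∀ x, f x ≤ A) (hK : 0 ≤ K) :
    ∃ q r, ∀ x, lipEnvelope K s f x ≤
      f x + A * (exp (-(K * |x - q|)) + exp (-(K * |x - r|))) := by
  obtain ⟨q, hq⟩ := exists_mul_exp_le_max hs hne hf hlc hf0 hA K
  obtain ⟨r, hr⟩ := exists_mul_exp_le_max hs hne hf hlc hf0 hA (-K)
  rw [abs_neg] at hr
  rw [abs_of_nonneg hK] at hq hr
  refine ⟨q, r, fun x ↦ ?_⟩
  have hA0 : 0 ≤ A := (hf0 x).trans (hA x)
  have hq0 : 0 ≤ A * exp (-(K * |x - q|)) := by positivity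
  have hr0 : 0 ≤ A * exp (-(K * |x - r|)) := by positivity
  rw [mul_add]
  obtain ⟨y, hy, hxy⟩ := (isGreatest_lipEnvelope K hs hne hf x).1
  simp only at hxy
  rcases le_total x y with h | h
  · have hbound := hq x y hy (mul_nonneg hK (sub_nonneg.2 h))
    rw [← abs_of_nonneg (sub_nonneg.2 h), abs_sub_comm, hxy] at hbound
    exact hbound.trans (max_le (by linarith) (by linarith [hf0 x]))
  · have hbound := hr x y hy (by nlinarith)
    rw [neg_mul, ← mul_neg, neg_sub, ← abs_of_nonneg (sub_nonneg.2 h), hxy] at hbound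
    exact hbound.trans (max_le (by linarith) (by linarith [hf0 x]))

end LipEnvelope

theorem exists_concave_lipschitz_majorant {f : ℝ → ℝ} {s : Set ℝ} {A K x₀ : ℝ} (hs : IsCompact s)
    (hconv : Convex ℝ s) (hf : UpperSemicontinuous f) (hlc : IsLogConcaveFn f)
    (hf0 : ∀ x, 0 ≤ f x) (hA : ∀ x, f x ≤ A) (hK : 0 ≤ K) (hx₀ : x₀ ∈ s) (hfx₀ : 0 < f x₀) :
    ∃ w : ℝ → ℝ, ConcaveOn ℝ univ w ∧ (∀ x y, |w x - w y| ≤ K * |x - y|) ∧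
      (∀ x, exp (w x) ≤ A) ∧ (∀ x ∈ s, f x ≤ exp (w x)) ∧
      ∃ q r, ∀ x, exp (w x) ≤ f x + A * (exp (-(K * |x - q|)) + exp (-(K * |x - r|))) := by
  have hne : s.Nonempty := ⟨x₀, hx₀⟩
  have hpos := lipEnvelope_pos (K := K) hs hf hx₀ hfx₀
  refine ⟨fun x ↦ log (lipEnvelope K s f x),
    (isLogConcaveFn_lipEnvelope hs hconv hne hf hlc hf0 hK).concaveOn_log hpos,
    abs_log_lipEnvelope_sub_le hs hf hf0 hK hx₀ hfx₀, ?_⟩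
  simp only [exp_log (hpos _)]
  exact ⟨lipEnvelope_le hs hne hf hf0 hK hA, fun x hx ↦ le_lipEnvelope hs hf hx,
    exists_lipEnvelope_le_add hs hne hf hlc hf0 hA hK⟩

/-! ### Concave splines -/

/-- A concave piecewise affine function on `ℝ`, stored as an affine function plus a nonnegative
combination of the ramps `y ↦ min z y`, one for each knot `z`. -/
structure ConcaveSpline where
  knots : Finset ℝ
  offset : ℝ
  slope : ℝ
  weight : ℝ → ℝ
  weight_nonneg : ∀ z, 0 ≤ weight z

namespace ConcaveSpline

instance : CoeFun ConcaveSpline fun _ ↦ ℝ → ℝ :=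
  ⟨fun S y ↦ S.offset + S.slope * y + ∑ z ∈ S.knots, S.weight z * min z y⟩

theorem continuous (S : ConcaveSpline) : Continuous S := by
  fun_prop

theorem concaveOn (S : ConcaveSpline) : ConcaveOn ℝ univ S := by
  have hmin (z : ℝ) : ConcaveOn ℝ univ fun y ↦ min z y :=
    (concaveOn_const z convex_univ).inf (concaveOn_id convex_univ)
  have hsum : ConcaveOn ℝ univ (∑ z ∈ S.knots, fun y ↦ S.weight z * min z y) :=
    Finset.sum_induction _ (ConcaveOn ℝ univ ·) (fun _ _ ↦ ConcaveOn.add)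
      (concaveOn_const 0 convex_univ) fun z _ ↦ (hmin z).smul (S.weight_nonneg z)
  refine (((concaveOn_const S.offset convex_univ).add
    ((LinearMap.mulLeft ℝ S.slope).concaveOn convex_univ)).add hsum).congr fun y _ ↦ ?_
  simp

/-- Change the slope of `S` to `b` to the right of `m`, which becomes a new knot. -/
noncomputable def bend (S : ConcaveSpline) (m b : ℝ) (hb : b ≤ S.slope) : ConcaveSpline where
  knots := insert m S.knots
  offset := S.offset
  slope := b
  weight := Function.update S.weight m (S.slope - b)
  weight_nonneg z := by
    rcases eq_or_ne z m with rfl | hz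
    · simpa using hb
    · simpa [hz] using S.weight_nonneg z

theorem bend_apply (S : ConcaveSpline) {m b : ℝ} (hb : b ≤ S.slope) (hm : ∀ z ∈ S.knots, z < m)
    (y : ℝ) : S.bend m b hb y = S y - (S.slope - b) * (y - min m y) := by
  have hmS : m ∉ S.knots := fun h ↦ (hm m h).false
  have hsum : ∑ z ∈ S.knots, (S.bend m b hb).weight z * min z y
      = ∑ z ∈ S.knots, S.weight z * min z y :=
    Finset.sum_congr rfl fun z hz ↦ by simp [bend, (hm z hz).ne]
  have hweight : (S.bend m b hb).weight m = S.slope - b := by simp [bend]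
  change S.offset + b * y + ∑ z ∈ insert m S.knots, (S.bend m b hb).weight z * min z y = _
  rw [Finset.sum_insert hmS, hsum, hweight]
  ring

theorem apply_of_forall_knots_le (S : ConcaveSpline) {m y : ℝ} (hm : ∀ z ∈ S.knots, z ≤ m)
    (hy : m ≤ y) : S y = S m + S.slope * (y - m) := by
  have hsum : ∑ z ∈ S.knots, S.weight z * min z y = ∑ z ∈ S.knots, S.weight z * min z m :=
    Finset.sum_congr rfl fun z hz ↦ by rw [min_eq_left (hm z hz), min_eq_left ((hm z hz).trans hy)]
  simp only [hsum]
  ring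

end ConcaveSpline

theorem slope_le_slope_of_concaveOn {u : ℝ → ℝ} (hu : ConcaveOn ℝ univ u) {a b c d : ℝ}
    (hab : a < b) (hcd : c < d) (hac : a ≤ c) (hbd : b ≤ d) : slope u c d ≤ slope u a b :=
  calc slope u c d = slope u d c := slope_comm u c d
    _ ≤ slope u d a := hu.slope_anti (mem_univ d) ⟨mem_univ a, (hab.trans_le hbd).ne⟩
        ⟨mem_univ c, hcd.ne⟩ hac
    _ = slope u a d := slope_comm u d a
    _ ≤ slope u a b := hu.slope_anti (mem_univ a) ⟨mem_univ b, hab.ne'⟩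
        ⟨mem_univ d, (hab.trans_le hbd).ne'⟩ hbd

/-- The affine function agreeing with `u` at `p` and at `q`, for `p ≠ q`. -/
noncomputable def chord (u : ℝ → ℝ) (p q y : ℝ) : ℝ :=
  u p + slope u p q * (y - p)

section Chord

variable {u : ℝ → ℝ} {p q y : ℝ}

theorem slope_mul_sub (u : ℝ → ℝ) (p q : ℝ) : slope u p q * (q - p) = u q - u p := by
  rw [mul_comm]; exact sub_smul_slope u p q

theorem chord_left (u : ℝ → ℝ) (p q : ℝ) : chord u p q p = u p := by
  simp [chord]

theorem chord_right (u : ℝ → ℝ) (p q : ℝ) : chord u p q q = u q := by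
  rw [chord, slope_mul_sub, add_sub_cancel]

theorem chord_le (hu : ConcaveOn ℝ univ u) (hy : y ∈ Icc p q) : chord u p q y ≤ u y := by
  rcases hy.1.eq_or_lt with rfl | hpy
  · rw [chord_left]
  · have hslope : slope u p q ≤ slope u p y :=
      slope_le_slope_of_concaveOn hu hpy (hpy.trans_le hy.2) le_rfl hy.2
    calc chord u p q y ≤ u p + slope u p y * (y - p) := by
          rw [chord]; gcongr
      _ = u y := by rw [slope_mul_sub, add_sub_cancel]

end Chord

/- Induction on the largest node `m`: the interpolant for `m` as right end point is bent at `m`. -/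
theorem exists_concaveSpline_interpolating {u : ℝ → ℝ} (hu : ConcaveOn ℝ univ u) {a : ℝ}
    (T : Finset ℝ) : ∀ b, a < b → (∀ z ∈ T, a < z ∧ z < b) →
    ∃ S : ConcaveSpline, S.knots = T ∧ S b = u b ∧
      (∃ p < b, S.slope = slope u p b) ∧
      ∀ y ∈ Icc a b, ∃ p ∈ insert a T, ∃ q ∈ insert b T, p < q ∧ y ∈ Icc p q ∧
        (∀ z ∈ T, z ≤ p ∨ q ≤ z) ∧ S y = chord u p q y := by
  induction T using Finset.induction_on_max with
  | empty =>
    intro b hab _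
    have happly (y : ℝ) : u a - slope u a b * a + slope u a b * y = chord u a b y := by
      rw [chord]; ring
    refine ⟨⟨∅, u a - slope u a b * a, slope u a b, 0, fun _ ↦ le_rfl⟩, rfl,
      ?_, ⟨a, hab, rfl⟩, fun y hy ↦ ⟨a, by simp, b, by simp, hab, hy, by simp, ?_⟩⟩
    · simp only [Finset.sum_empty, add_zero, happly, chord_right]
    · simp only [Finset.sum_empty, add_zero, happly]
  | insert m T hm ih =>
    intro b _ hT
    obtain ⟨⟨ham, hmb⟩, hT⟩ := Finset.forall_mem_insert .. |>.1 hT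
    obtain ⟨S, hknots, hSm, ⟨p₀, hp₀m, hslope⟩, hinterp⟩ :=
      ih m ham fun z hz ↦ ⟨(hT z hz).1, hm z hz⟩
    have hbend : slope u m b ≤ S.slope :=
      hslope ▸ slope_le_slope_of_concaveOn hu hp₀m hmb hp₀m.le hmb.le
    have happly := S.bend_apply hbend (by rwa [hknots])
    have hright (y : ℝ) (hy : m ≤ y) : S.bend m _ hbend y = chord u m b y := by
      rw [happly, min_eq_left hy, S.apply_of_forall_knots_le (hknots ▸ fun z hz ↦ (hm z hz).le) hy,
        hSm, chord]
      ring
    refine ⟨S.bend m _ hbend, congrArg (insert m) hknots, ?_, ⟨m, hmb, rfl⟩, fun y hy ↦ ?_⟩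
    · rw [hright b hmb.le, chord_right]
    rcases le_total y m with hym | hmy
    · obtain ⟨p, hp, q, hq, hpq, hypq, hcons, hSy⟩ := hinterp y ⟨hy.1, hym⟩
      have hqm : q ≤ m := (Finset.mem_insert.1 hq).elim le_of_eq fun h ↦ (hm q h).le
      refine ⟨p, by grind, q, by grind, hpq, hypq, by grind, ?_⟩
      rw [happly, min_eq_right hym, hSy, sub_self, mul_zero, sub_zero]
    · exact ⟨m, by simp, b, by simp, hmb, ⟨hmy, hy.2⟩, by grind, hright y hmy⟩

/-! ### Chord errors measured on the `arsinh` scale of slopes -/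

theorem sub_le_of_arsinh_sub_le {s t η : ℝ} (hst : s ≤ t) (hη1 : η ≤ 1)
    (hη : arsinh t - arsinh s ≤ η) : t - s ≤ 2 * η * (1 + |s|) := by
  set δ := arsinh t - arsinh s with hδ
  have hδ0 : 0 ≤ δ := sub_nonneg.2 (arsinh_le_arsinh.2 hst)
  have ht : t = s * cosh δ + √(1 + s ^ 2) * sinh δ := by
    rw [← sinh_arsinh t, ← cosh_arsinh, ← add_sub_cancel (arsinh s) (arsinh t), ← hδ, sinh_add,
      sinh_arsinh]
  have hsqrt : √(1 + s ^ 2) ≤ 1 + |s| := by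
    rw [sqrt_le_left (by positivity)]
    nlinarith [sq_abs s, abs_nonneg s]
  have hexp : exp δ - 1 ≤ 2 * δ := by
    have h := abs_exp_sub_one_le (x := δ) (by rw [abs_of_nonneg hδ0]; linarith)
    rw [abs_of_nonneg hδ0] at h
    exact (le_abs_self _).trans h
  have hsinh : 0 ≤ sinh δ := sinh_nonneg_iff.2 hδ0
  have hcosh : 0 ≤ cosh δ - 1 := sub_nonneg.2 (one_le_cosh δ)
  calc t - s = s * (cosh δ - 1) + √(1 + s ^ 2) * sinh δ := by rw [ht]; ring
    _ ≤ (1 + |s|) * (cosh δ - 1) + (1 + |s|) * sinh δ :=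
        add_le_add (mul_le_mul_of_nonneg_right (by linarith [le_abs_self s]) hcosh)
          (mul_le_mul_of_nonneg_right hsqrt hsinh)
    _ = (1 + |s|) * (exp δ - 1) := by rw [← cosh_add_sinh]; ring
    _ ≤ (1 + |s|) * (2 * η) := by gcongr; linarith
    _ = 2 * η * (1 + |s|) := mul_comm _ _

theorem sub_le_of_arsinh_sub_le' {s t η : ℝ} (hst : s ≤ t) (hη1 : η ≤ 1)
    (hη : arsinh t - arsinh s ≤ η) : t - s ≤ 2 * η * (1 + |t|) := by
  have h := sub_le_of_arsinh_sub_le (neg_le_neg hst) hη1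
    (by rw [arsinh_neg, arsinh_neg]; linarith)
  rwa [abs_neg, neg_sub_neg] at h

section SubChord

variable {u : ℝ → ℝ} {p p' q' q y η : ℝ}

theorem sub_chord_le_of_slope_nonneg (hu : ConcaveOn ℝ univ u) (hpp' : p < p') (hp'y : p' ≤ y)
    (hyq' : y ≤ q') (hq'q : q' < q) (hη1 : η ≤ 1)
    (hη : arsinh (slope u p p') - arsinh (slope u q' q) ≤ η) (hpos : 0 ≤ slope u q' q) :
    u y ≤ u q ∧ u y - chord u p q y ≤ 2 * η * ((q - y) + (u q - u y)) := by
  have hyq : 0 < q - y := by linarith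
  have hrise : slope u q' q * (q - y) ≤ u q - u y := by
    rw [← slope_mul_sub]
    gcongr
    exact slope_le_slope_of_concaveOn hu (sub_pos.1 hyq) hq'q hyq' le_rfl
  have hchord : chord u p q y = u q - slope u p q * (q - y) := by
    rw [chord]; linear_combination slope_mul_sub u p q
  have hslope : slope u p q ≤ slope u p p' :=
    slope_le_slope_of_concaveOn hu hpp' (by linarith) le_rfl (by linarith)
  have hdiff := sub_le_of_arsinh_sub_le
    (slope_le_slope_of_concaveOn hu hpp' hq'q (by linarith) (by linarith)) hη1 hη
  have hη0 : 0 ≤ η := (sub_nonneg.2 (arsinh_le_arsinh.2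
    (slope_le_slope_of_concaveOn hu hpp' hq'q (by linarith) (by linarith)))).trans hη
  rw [abs_of_nonneg hpos] at hdiff
  refine ⟨sub_nonneg.1 ((mul_nonneg hpos hyq.le).trans hrise), ?_⟩
  calc u y - chord u p q y ≤ (slope u p q - slope u q' q) * (q - y) := by rw [hchord]; linarith
    _ ≤ 2 * η * (1 + slope u q' q) * (q - y) := by gcongr; linarith
    _ = 2 * η * ((q - y) + slope u q' q * (q - y)) := by ring
    _ ≤ 2 * η * ((q - y) + (u q - u y)) := by gcongr

theorem sub_chord_le_of_slope_nonpos (hu : ConcaveOn ℝ univ u) (hpp' : p < p') (hp'y : p' ≤ y)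
    (hyq' : y ≤ q') (hq'q : q' < q) (hη1 : η ≤ 1)
    (hη : arsinh (slope u p p') - arsinh (slope u q' q) ≤ η) (hneg : slope u p p' ≤ 0) :
    u y ≤ u p ∧ u y - chord u p q y ≤ 2 * η * ((y - p) + (u p - u y)) := by
  have hpy : 0 < y - p := by linarith
  have hrise : u y - u p ≤ slope u p p' * (y - p) := by
    rw [← slope_mul_sub]
    gcongr
    exact slope_le_slope_of_concaveOn hu hpp' (sub_pos.1 hpy) le_rfl hp'y
  have hslope : slope u q' q ≤ slope u p q :=
    slope_le_slope_of_concaveOn hu (by linarith) hq'q (by linarith) le_rfl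
  have hdiff := sub_le_of_arsinh_sub_le'
    (slope_le_slope_of_concaveOn hu hpp' hq'q (by linarith) (by linarith)) hη1 hη
  have hη0 : 0 ≤ η := (sub_nonneg.2 (arsinh_le_arsinh.2
    (slope_le_slope_of_concaveOn hu hpp' hq'q (by linarith) (by linarith)))).trans hη
  rw [abs_of_nonpos hneg] at hdiff
  refine ⟨sub_nonpos.1 (hrise.trans (mul_nonpos_of_nonpos_of_nonneg hneg hpy.le)), ?_⟩
  calc u y - chord u p q y ≤ (slope u p p' - slope u p q) * (y - p) := by rw [chord]; linarith
    _ ≤ 2 * η * (1 + -slope u p p') * (y - p) := by gcongr; linarith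
    _ = 2 * η * ((y - p) + -(slope u p p' * (y - p))) := by ring
    _ ≤ 2 * η * ((y - p) + (u p - u y)) := by gcongr; linarith

end SubChord

/-! ### Selecting the knots on a lattice -/

theorem card_filter_ne_succ_le_sub {Λ : ℕ → ℤ} (hΛ : Monotone Λ) (M : ℕ) :
    (((Finset.range M).filter fun j ↦ Λ j ≠ Λ (j + 1)).card : ℤ) ≤ Λ M - Λ 0 := by
  rw [Finset.card_filter, Nat.cast_sum, ← Finset.sum_range_sub]
  refine Finset.sum_le_sum fun j _ ↦ ?_
  have := hΛ j.le_succ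
  split_ifs <;> grind

theorem eq_of_forall_eq_succ {α : Type*} {Λ : ℕ → α} {a b : ℕ} (hab : a ≤ b)
    (h : ∀ j, a ≤ j → j < b → Λ j = Λ (j + 1)) : Λ a = Λ b := by
  induction b, hab using Nat.le_induction with
  | base => rfl
  | succ b hab ih =>
    exact (ih fun j haj hjb ↦ h j haj (hjb.trans b.lt_succ_self)).trans (h b hab b.lt_succ_self)

theorem sum_abs_max_sub_max_le {U : ℕ → ℝ} (hU : Antitone fun j ↦ U (j + 1) - U j) {B τ : ℝ}
    (hB : ∀ i, U i ≤ B) (hτ : τ ≤ B) (m : ℕ) :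
    ∑ k ∈ Finset.range m, |max (U (k + 1)) τ - max (U k) τ| ≤ 2 * (B - τ) := by
  have hmaxB (i : ℕ) : max (U i) τ ≤ B := max_le (hB i) hτ
  have hτmax (i : ℕ) : τ ≤ max (U i) τ := le_max_right _ _
  suffices h : ∑ k ∈ Finset.range m, |max (U (k + 1)) τ - max (U k) τ| ≤
      (B - max (U 0) τ) + (B - max (U m) τ) by
    linarith [hτmax 0, hτmax m]
  induction m with
  | zero => rw [Finset.sum_range_zero]; linarith [hmaxB 0]
  | succ m ih =>
    rcases le_total (U (m + 1)) (U m) with hfall | hrise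
    · have hmax : max (U (m + 1)) τ ≤ max (U m) τ := max_le_max_right τ hfall
      rw [Finset.sum_range_succ, abs_of_nonpos (sub_nonpos.2 hmax)]
      linarith
    · have hmono (k : ℕ) (hk : k ∈ Finset.range (m + 1)) :
          |max (U (k + 1)) τ - max (U k) τ| = max (U (k + 1)) τ - max (U k) τ := by
        have := hU (Nat.lt_succ_iff.1 (Finset.mem_range.1 hk))
        exact abs_of_nonneg (sub_nonneg.2 (max_le_max_right τ (by linarith)))
      rw [Finset.sum_congr rfl hmono, Finset.sum_range_sub fun k ↦ max (U k) τ]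
      linarith [hmaxB (m + 1)]

/-- The `ℓ¹` length up to abscissa `j * d` of the graph of `u` clipped from below at `τ` and sampled
on the lattice `d * ℕ`. -/
noncomputable def clippedLength (u : ℝ → ℝ) (τ d : ℝ) (j : ℕ) : ℝ :=
  j * d + ∑ k ∈ Finset.range j, |max (u ((k + 1 : ℕ) * d)) τ - max (u (k * d)) τ|

section ClippedLength

variable {u : ℝ → ℝ} {τ d K B : ℝ}

theorem le_clippedLength_sub (u : ℝ → ℝ) (τ d : ℝ) {i j : ℕ} (hij : i ≤ j) :
    (j * d - i * d) + |max (u (j * d)) τ - max (u (i * d)) τ| ≤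
      clippedLength u τ d j - clippedLength u τ d i := by
  have h := dist_le_Ico_sum_dist (fun k : ℕ ↦ max (u (k * d)) τ) hij
  rw [dist_comm, Finset.sum_congr rfl fun k _ ↦ dist_comm _ _, Finset.sum_Ico_eq_sub _ hij] at h
  simp only [Real.dist_eq] at h
  simp only [clippedLength]
  linarith

theorem clippedLength_monotone (u : ℝ → ℝ) (τ : ℝ) (hd : 0 ≤ d) :
    Monotone (clippedLength u τ d) := by
  intro i j hij
  have hstep : (i : ℝ) * d ≤ j * d := by gcongr
  linarith [le_clippedLength_sub u τ d hij, abs_nonneg (max (u (j * d)) τ - max (u (i * d)) τ)]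

theorem clippedLength_succ_sub_le (hlip : ∀ x y, |u x - u y| ≤ K * |x - y|) (hd : 0 ≤ d) (j : ℕ) :
    clippedLength u τ d (j + 1) - clippedLength u τ d j ≤ (K + 1) * d := by
  have hdist : |((j + 1 : ℕ) : ℝ) * d - j * d| = d := by
    rw [Nat.cast_succ, add_one_mul, add_sub_cancel_left, abs_of_nonneg hd]
  have h := (abs_max_sub_max_le_abs (u ((j + 1 : ℕ) * d)) (u (j * d)) τ).trans (hlip _ _)
  rw [hdist] at h
  rw [clippedLength, clippedLength, Finset.sum_range_succ, Nat.cast_succ]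
  push_cast at h ⊢
  linarith

theorem slope_lattice_antitone (hu : ConcaveOn ℝ univ u) (hd : 0 < d) :
    Antitone fun j : ℕ ↦ slope u (j * d) ((j + 1 : ℕ) * d) := by
  intro i j hij
  refine slope_le_slope_of_concaveOn hu ?_ ?_ ?_ ?_ <;> gcongr <;> omega

theorem clippedLength_le (hu : ConcaveOn ℝ univ u) (hd : 0 < d) (hB : ∀ x, u x ≤ B) (hτ : τ ≤ B)
    (j : ℕ) : clippedLength u τ d j ≤ j * d + 2 * (B - τ) := by
  have hincr : Antitone fun j : ℕ ↦ u ((j + 1 : ℕ) * d) - u (j * d) := by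
    convert (slope_lattice_antitone hu hd).mul_const hd.le using 2 with j
    rw [← slope_mul_sub]
    push_cast
    ring
  exact add_le_add_right (sum_abs_max_sub_max_le (U := fun j : ℕ ↦ u (j * d)) hincr
    (fun _ ↦ hB _) hτ j) _

end ClippedLength

/-- The classes of lattice points that a knot has to separate: `u` is replaced by a chord where
both the clipped length, in units of `ρ`, and the inverse hyperbolic sine of the slope, in units of
`η`, keep their integer parts. The sign makes the label nondecreasing for concave `u`. -/
noncomputable def knotLevel (u : ℝ → ℝ) (τ d ρ η : ℝ) (j : ℕ) : ℤ :=
  ⌊clippedLength u τ d j / ρ⌋ - ⌊arsinh (slope u (j * d) ((j + 1 : ℕ) * d)) / η⌋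

section KnotLevel

variable {u : ℝ → ℝ} {τ d ρ η K B : ℝ}

theorem slope_floor_antitone (hu : ConcaveOn ℝ univ u) (hd : 0 < d) (hη : 0 ≤ η) :
    Antitone fun j : ℕ ↦ ⌊arsinh (slope u (j * d) ((j + 1 : ℕ) * d)) / η⌋ := fun _ _ hij ↦
  Int.floor_mono
    (div_le_div_of_nonneg_right (arsinh_le_arsinh.2 (slope_lattice_antitone hu hd hij)) hη)

theorem clippedLength_floor_monotone (u : ℝ → ℝ) (τ : ℝ) (hd : 0 ≤ d) (hρ : 0 ≤ ρ) :
    Monotone fun j ↦ ⌊clippedLength u τ d j / ρ⌋ := fun _ _ hij ↦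
  Int.floor_mono (div_le_div_of_nonneg_right (clippedLength_monotone u τ hd hij) hρ)

theorem knotLevel_monotone (hu : ConcaveOn ℝ univ u) (hd : 0 < d) (hρ : 0 ≤ ρ) (hη : 0 ≤ η) :
    Monotone (knotLevel u τ d ρ η) := fun _ _ hij ↦
  sub_le_sub (clippedLength_floor_monotone u τ hd.le hρ hij) (slope_floor_antitone hu hd hη hij)

theorem knotLevel_sub_le (hu : ConcaveOn ℝ univ u) (hlip : ∀ x y, |u x - u y| ≤ K * |x - y|)
    (hB : ∀ x, u x ≤ B) (hτ : τ ≤ B) (hd : 0 < d) (hρ : 0 < ρ) (hη : 0 < η) (j : ℕ) :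
    ((knotLevel u τ d ρ η j - knotLevel u τ d ρ η 0 : ℤ) : ℝ) ≤
      (j * d + 2 * (B - τ)) / ρ + 2 * arsinh K / η + 1 := by
  have hslope (k : ℕ) : |arsinh (slope u (k * d) ((k + 1 : ℕ) * d))| ≤ arsinh K := by
    have hstep : 0 < ((k + 1 : ℕ) : ℝ) * d - k * d := by push_cast; linarith
    have hle : |slope u (k * d) ((k + 1 : ℕ) * d)| ≤ K := by
      rw [slope_def_field, abs_div, div_le_iff₀ (abs_pos.2 hstep.ne')]
      exact hlip _ _
    rw [abs_le] at hle ⊢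
    rw [← arsinh_neg, arsinh_le_arsinh, arsinh_le_arsinh]
    exact hle
  set s : ℕ → ℝ := fun k ↦ arsinh (slope u (k * d) ((k + 1 : ℕ) * d))
  have hlength : clippedLength u τ d j / ρ ≤ (j * d + 2 * (B - τ)) / ρ := by
    gcongr; exact clippedLength_le hu hd hB hτ j
  have hdrop : s 0 / η - s j / η ≤ 2 * arsinh K / η := by
    rw [← sub_div]
    gcongr
    linarith [abs_le.1 (hslope 0), abs_le.1 (hslope j)]
  have hzero : ⌊clippedLength u τ d 0 / ρ⌋ = 0 := by simp [clippedLength]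
  have hknot : ((knotLevel u τ d ρ η j - knotLevel u τ d ρ η 0 : ℤ) : ℝ) =
      ⌊clippedLength u τ d j / ρ⌋ - ⌊s j / η⌋ + ⌊s 0 / η⌋ := by
    simp only [knotLevel, hzero, Int.cast_sub, Int.cast_zero, s]; ring
  linarith [Int.floor_le (clippedLength u τ d j / ρ), Int.floor_le (s 0 / η),
    Int.sub_one_lt_floor (s j / η)]

theorem floors_eq_of_knotLevel_eq (hu : ConcaveOn ℝ univ u) (hd : 0 < d) (hρ : 0 ≤ ρ) (hη : 0 ≤ η)
    {a b : ℕ} (hab : a ≤ b) (hlevel : knotLevel u τ d ρ η a = knotLevel u τ d ρ η b) :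
    ⌊clippedLength u τ d b / ρ⌋ = ⌊clippedLength u τ d a / ρ⌋ ∧
      ⌊arsinh (slope u (a * d) ((a + 1 : ℕ) * d)) / η⌋ =
        ⌊arsinh (slope u (b * d) ((b + 1 : ℕ) * d)) / η⌋ := by
  have hlength := clippedLength_floor_monotone u τ hd.le hρ hab
  have hslope := slope_floor_antitone hu hd hη hab
  simp only [knotLevel] at hlength hslope hlevel
  constructor <;> omega

theorem clippedLength_sub_le_of_floor_eq (hlip : ∀ x y, |u x - u y| ≤ K * |x - y|) (hd : 0 ≤ d)
    (hρ : 0 < ρ) {a b : ℕ} (hfloor : ⌊clippedLength u τ d b / ρ⌋ = ⌊clippedLength u τ d a / ρ⌋) :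
    clippedLength u τ d (b + 1) - clippedLength u τ d a ≤ ρ + (K + 1) * d := by
  have hlt := (Int.abs_sub_lt_one_of_floor_eq_floor hfloor).trans_le' (le_abs_self _)
  rw [← sub_div, div_lt_one hρ] at hlt
  linarith [clippedLength_succ_sub_le (τ := τ) hlip hd b]

theorem sub_chord_le_of_knotLevel_eq (hu : ConcaveOn ℝ univ u)
    (hlip : ∀ x y, |u x - u y| ≤ K * |x - y|) (hd : 0 < d) (hρ : 0 < ρ) (hη : 0 < η) (hη1 : η ≤ 1)
    {a b i : ℕ} (hai : a < i) (hib : i ≤ b) (hτ : τ ≤ u (i * d))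
    (hlevel : knotLevel u τ d ρ η a = knotLevel u τ d ρ η b) :
    u (i * d) - chord u (a * d) ((b + 1 : ℕ) * d) (i * d) ≤ 2 * η * (ρ + (K + 1) * d) := by
  obtain ⟨hlengthFloor, hfloor⟩ := floors_eq_of_knotLevel_eq hu hd hρ.le hη.le (by omega) hlevel
  have hlength := clippedLength_sub_le_of_floor_eq hlip hd.le hρ hlengthFloor
  have hmono := clippedLength_monotone u τ hd.le
  have harsinh : arsinh (slope u (a * d) ((a + 1 : ℕ) * d)) -
      arsinh (slope u (b * d) ((b + 1 : ℕ) * d)) ≤ η := by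
    have h := (le_abs_self _).trans (Int.abs_sub_lt_one_of_floor_eq_floor hfloor).le
    rwa [← sub_div, div_le_one hη] at h
  have haa : (a : ℝ) * d < (a + 1 : ℕ) * d := by gcongr; omega
  have hai' : ((a + 1 : ℕ) : ℝ) * d ≤ i * d := by gcongr; omega
  have hib' : (i : ℝ) * d ≤ b * d := by gcongr
  have hbb : (b : ℝ) * d < (b + 1 : ℕ) * d := by gcongr; omega
  rcases le_or_gt 0 (slope u (b * d) ((b + 1 : ℕ) * d)) with hb | hb
  · obtain ⟨hle, hgap⟩ := sub_chord_le_of_slope_nonneg hu haa hai' hib' hbb hη1 harsinh hb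
    refine hgap.trans (mul_le_mul_of_nonneg_left ?_ (by positivity))
    have h := le_clippedLength_sub u τ d (show i ≤ b + 1 by omega)
    rw [max_eq_left (hτ.trans hle), max_eq_left hτ, abs_of_nonneg (sub_nonneg.2 hle)] at h
    linarith [hmono hai.le]
  · have ha : slope u (a * d) ((a + 1 : ℕ) * d) ≤ 0 := by
      by_contra! ha
      have h0 : 0 ≤ ⌊arsinh (slope u (a * d) ((a + 1 : ℕ) * d)) / η⌋ :=
        Int.floor_nonneg.2 (div_nonneg (arsinh_nonneg_iff.2 ha.le) hη.le)
      rw [hfloor, Int.floor_nonneg] at h0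
      exact h0.not_gt (div_neg_of_neg_of_pos (arsinh_neg_iff.2 hb) hη)
    obtain ⟨hle, hgap⟩ := sub_chord_le_of_slope_nonpos hu haa hai' hib' hbb hη1 harsinh ha
    refine hgap.trans (mul_le_mul_of_nonneg_left ?_ (by positivity))
    have h := le_clippedLength_sub u τ d hai.le
    rw [max_eq_left (hτ.trans hle), max_eq_left hτ, abs_sub_comm,
      abs_of_nonneg (sub_nonneg.2 hle)] at h
    linarith [hmono (show i ≤ b + 1 by omega)]

end KnotLevel

/- Moving `y` to a neighbouring lattice point in the direction where the chord decreases costs only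
the variation of `u`. -/
theorem sub_chord_le_of_forall_lattice {u : ℝ → ℝ} {K d τ e : ℝ}
    (hlip : ∀ x y, |u x - u y| ≤ K * |x - y|) (hd : 0 < d) {a b : ℕ}
    (hlattice : ∀ i : ℕ, a ≤ i → i ≤ b → τ ≤ u (i * d) →
      u (i * d) - chord u (a * d) (b * d) (i * d) ≤ e)
    {y : ℝ} (hy : y ∈ Icc (a * d) (b * d)) (hτ : τ + K * d ≤ u y) :
    u y - chord u (a * d) (b * d) y ≤ e + K * d := by
  have hK : 0 ≤ K := by simpa using (abs_nonneg _).trans (hlip 1 0)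
  have hy0 : 0 ≤ y / d := div_nonneg ((by positivity : 0 ≤ (a : ℝ) * d).trans hy.1) hd.le
  obtain ⟨i, hai, hib, hdist, hchord⟩ : ∃ i : ℕ, a ≤ i ∧ i ≤ b ∧ |y - i * d| ≤ d ∧
      chord u (a * d) (b * d) (i * d) ≤ chord u (a * d) (b * d) y := by
    have hay : (a : ℝ) ≤ y / d := (le_div_iff₀ hd).2 hy.1
    have hyb : y / d ≤ b := (div_le_iff₀ hd).2 hy.2
    rcases le_total 0 (slope u (a * d) (b * d)) with hslope | hslope
    · have hfloor : (⌊y / d⌋₊ : ℝ) * d ≤ y := (le_div_iff₀ hd).1 (Nat.floor_le hy0)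
      have hfloor' : y < (⌊y / d⌋₊ + 1) * d := (div_lt_iff₀ hd).1 (Nat.lt_floor_add_one _)
      refine ⟨⌊y / d⌋₊, Nat.le_floor hay, Nat.floor_le_of_le hyb, ?_, ?_⟩
      · rw [abs_le]; constructor <;> linarith
      · rw [chord, chord]; gcongr
    · have hceil : y ≤ ⌈y / d⌉₊ * d := (div_le_iff₀ hd).1 (Nat.le_ceil _)
      have hceil' : (⌈y / d⌉₊ : ℝ) * d < y + d := by
        have h := mul_lt_mul_of_pos_right (Nat.ceil_lt_add_one hy0) hd
        rwa [add_one_mul, div_mul_cancel₀ _ hd.ne'] at h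
      refine ⟨⌈y / d⌉₊, by exact_mod_cast hay.trans (Nat.le_ceil _), Nat.ceil_le.2 hyb, ?_, ?_⟩
      · rw [abs_le]; constructor <;> linarith
      · rw [chord, chord]
        linarith [mul_le_mul_of_nonpos_left (sub_le_sub_right hceil (a * d)) hslope]
  have hmove : u y - u (i * d) ≤ K * d :=
    (le_abs_self _).trans ((hlip _ _).trans (mul_le_mul_of_nonneg_left hdist hK))
  linarith [hlattice i hai hib (by linarith)]

theorem sub_chord_le_of_forall_knotLevel_eq {u : ℝ → ℝ} {K τ d ρ η : ℝ} (hu : ConcaveOn ℝ univ u)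
    (hlip : ∀ x y, |u x - u y| ≤ K * |x - y|) (hd : 0 < d) (hρ : 0 < ρ) (hη : 0 < η) (hη1 : η ≤ 1)
    {a b : ℕ} (hab : a < b)
    (hlevel : ∀ j, a ≤ j → j + 1 < b → knotLevel u τ d ρ η j = knotLevel u τ d ρ η (j + 1))
    {y : ℝ} (hy : y ∈ Icc (a * d) (b * d)) (hτ : τ + K * d ≤ u y) :
    u y - chord u (a * d) (b * d) y ≤ 2 * η * (ρ + (K + 1) * d) + K * d := by
  obtain ⟨b, rfl⟩ : ∃ b', b = b' + 1 := ⟨b - 1, by omega⟩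
  have hK : 0 ≤ K := by simpa using (abs_nonneg _).trans (hlip 1 0)
  have hconst : knotLevel u τ d ρ η a = knotLevel u τ d ρ η b :=
    eq_of_forall_eq_succ (by omega) fun j haj hjb ↦ hlevel j haj (by omega)
  refine sub_chord_le_of_forall_lattice hlip hd (fun i hai hib hτi ↦ ?_) hy hτ
  rcases hai.eq_or_lt with rfl | hai
  · rw [chord_left, sub_self]; positivity
  rcases hib.eq_or_lt with rfl | hib
  · rw [chord_right, sub_self]; positivity
  exact sub_chord_le_of_knotLevel_eq hu hlip hd hρ hη hη1 hai (by omega) hτi hconst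

/-- The lattice points `1 ≤ j ≤ M`, scaled by `d`, at which `knotLevel` changes. The first lattice
point is always included, so that the set is nonempty. -/
noncomputable def knotSet (u : ℝ → ℝ) (τ d ρ η : ℝ) (M : ℕ) : Finset ℝ :=
  (insert 0 ((Finset.range M).filter fun j ↦
    knotLevel u τ d ρ η j ≠ knotLevel u τ d ρ η (j + 1))).image fun j : ℕ ↦ ((j + 1 : ℕ) : ℝ) * d

section KnotSet

variable {u : ℝ → ℝ} {K B τ d ρ η : ℝ} {M : ℕ}

theorem exists_nat_of_mem_knotSet (hM : 0 < M) {z : ℝ} (hz : z ∈ knotSet u τ d ρ η M) :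
    ∃ j : ℕ, 0 < j ∧ j < M + 1 ∧ z = j * d := by
  obtain ⟨j, hj, rfl⟩ := Finset.mem_image.1 hz
  exact ⟨j + 1, j.succ_pos, by grind, rfl⟩

theorem mem_knotSet_of_knotLevel_ne {j : ℕ} (hj : j < M)
    (hne : knotLevel u τ d ρ η j ≠ knotLevel u τ d ρ η (j + 1)) :
    ((j + 1 : ℕ) : ℝ) * d ∈ knotSet u τ d ρ η M :=
  Finset.mem_image_of_mem _
    (Finset.mem_insert_of_mem (Finset.mem_filter.2 ⟨Finset.mem_range.2 hj, hne⟩))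

theorem card_knotSet_le (hu : ConcaveOn ℝ univ u) (hlip : ∀ x y, |u x - u y| ≤ K * |x - y|)
    (hB : ∀ x, u x ≤ B) (hτ : τ ≤ B) (hd : 0 < d) (hρ : 0 < ρ) (hη : 0 < η) :
    ((knotSet u τ d ρ η M).card : ℝ) ≤ (M * d + 2 * (B - τ)) / ρ + 2 * arsinh K / η + 2 := by
  have hcard : ((knotSet u τ d ρ η M).card : ℤ) ≤
      knotLevel u τ d ρ η M - knotLevel u τ d ρ η 0 + 1 := by
    refine le_trans ?_
      (add_le_add_left (card_filter_ne_succ_le_sub (knotLevel_monotone hu hd hρ.le hη.le) M) 1)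
    exact_mod_cast Finset.card_image_le.trans (Finset.card_insert_le _ _)
  have hcard' : ((knotSet u τ d ρ η M).card : ℝ) ≤
      (knotLevel u τ d ρ η M - knotLevel u τ d ρ η 0 : ℤ) + 1 := by
    exact_mod_cast hcard
  linarith [knotLevel_sub_le hu hlip hB hτ hd hρ hη M]

theorem sub_chord_le_of_consecutive (hu : ConcaveOn ℝ univ u)
    (hlip : ∀ x y, |u x - u y| ≤ K * |x - y|) (hd : 0 < d) (hρ : 0 < ρ) (hη : 0 < η) (hη1 : η ≤ 1)
    {a b : ℕ} (hab : a < b) (hbM : b ≤ M + 1)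
    (hcons : ∀ z ∈ knotSet u τ d ρ η M, z ≤ a * d ∨ b * d ≤ z)
    {y : ℝ} (hy : y ∈ Icc (a * d) (b * d)) (hτ : τ + K * d ≤ u y) :
    u y - chord u (a * d) (b * d) y ≤ 2 * η * (ρ + (K + 1) * d) + K * d := by
  refine sub_chord_le_of_forall_knotLevel_eq hu hlip hd hρ hη hη1 hab (fun j haj hjb ↦ ?_) hy hτ
  by_contra hjump
  rcases hcons _ (mem_knotSet_of_knotLevel_ne (by omega) hjump) with h | h
  · have : j + 1 ≤ a := by exact_mod_cast le_of_mul_le_mul_right h hd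
    omega
  · have : b ≤ j + 1 := by exact_mod_cast le_of_mul_le_mul_right h hd
    omega

theorem exists_concaveSpline_approx (hu : ConcaveOn ℝ univ u)
    (hlip : ∀ x y, |u x - u y| ≤ K * |x - y|) (hB : ∀ x, u x ≤ B) (hτ : τ ≤ B) (hd : 0 < d)
    (hρ : 0 < ρ) (hη : 0 < η) (hη1 : η ≤ 1) (hM : 0 < M) :
    ∃ S : ConcaveSpline, S.knots.Nonempty ∧
      (∀ z ∈ S.knots, ∃ j : ℕ, 0 < j ∧ j < M + 1 ∧ z = j * d) ∧
      (S.knots.card : ℝ) ≤ (M * d + 2 * (B - τ)) / ρ + 2 * arsinh K / η + 2 ∧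
      ∀ y ∈ Icc 0 ((M + 1 : ℕ) * d), S y ≤ u y ∧
        (τ + K * d ≤ u y → u y - S y ≤ 2 * η * (ρ + (K + 1) * d) + K * d) := by
  have hlattice : ∀ z ∈ knotSet u τ d ρ η M, ∃ j : ℕ, 0 < j ∧ j < M + 1 ∧ z = j * d :=
    fun z hz ↦ exists_nat_of_mem_knotSet hM hz
  have hinside : ∀ z ∈ knotSet u τ d ρ η M, 0 < z ∧ z < (M + 1 : ℕ) * d := by
    intro z hz
    obtain ⟨j, hj0, hjM, rfl⟩ := hlattice z hz
    exact ⟨by positivity, by gcongr⟩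
  obtain ⟨S, hknots, -, -, hinterp⟩ :=
    exists_concaveSpline_interpolating hu _ ((M + 1 : ℕ) * d) (by positivity) hinside
  refine ⟨S, hknots ▸ (Finset.insert_nonempty _ _).image _, hknots ▸ hlattice,
    hknots ▸ card_knotSet_le hu hlip hB hτ hd hρ hη, fun y hy ↦ ?_⟩
  obtain ⟨p, hp, q, hq, hpq, hypq, hcons, hSy⟩ := hinterp y hy
  rw [hSy]
  refine ⟨chord_le hu hypq, fun hgood ↦ ?_⟩
  obtain ⟨a, rfl⟩ : ∃ a : ℕ, p = a * d := by
    rcases Finset.mem_insert.1 hp with rfl | hp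
    · exact ⟨0, by simp⟩
    · exact (hlattice p hp).imp fun _ h ↦ h.2.2
  obtain ⟨b, hbM, rfl⟩ : ∃ b : ℕ, b ≤ M + 1 ∧ q = b * d := by
    rcases Finset.mem_insert.1 hq with rfl | hq
    · exact ⟨M + 1, le_rfl, rfl⟩
    · exact (hlattice q hq).imp fun _ h ↦ ⟨h.2.1.le, h.2.2⟩
  have hab : a < b := by exact_mod_cast lt_of_mul_lt_mul_right hpq hd.le
  exact sub_chord_le_of_consecutive hu hlip hd hρ hη hη1 hab hbM hcons hypq hgood

end KnotSet

theorem exists_nat_div_mem_Icc {δ R : ℝ} (hδ : 0 < δ) (hδR : 2 * δ ≤ R) :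
    ∃ M : ℕ, 0 < M ∧ R / (M + 1 : ℕ) ∈ Icc δ (2 * δ) := by
  have htwo : 2 ≤ R / δ := (le_div_iff₀ hδ).2 hδR
  have hfloor : 2 ≤ ⌊R / δ⌋₊ := Nat.le_floor htwo
  obtain ⟨M, hM⟩ : ∃ M, ⌊R / δ⌋₊ = M + 1 := ⟨⌊R / δ⌋₊ - 1, by omega⟩
  have hlower := (le_div_iff₀ hδ).1 (Nat.floor_le (zero_le_two.trans htwo))
  have hupper := (div_lt_iff₀ hδ).1 (Nat.lt_floor_add_one (R / δ))
  rw [hM] at hlower hupper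
  have hM1 : (0 : ℝ) < (M + 1 : ℕ) := by positivity
  have hMδ : 1 * δ ≤ (M + 1 : ℕ) * δ := by gcongr; norm_cast; omega
  exact ⟨M, by omega, (le_div_iff₀ hM1).2 (by linarith),
    (div_le_iff₀ hM1).2 (by linarith [hMδ])⟩

theorem exists_separated_concaveSpline_approx {u : ℝ → ℝ} {K B τ δ ρ η R : ℝ}
    (hu : ConcaveOn ℝ univ u) (hlip : ∀ x y, |u x - u y| ≤ K * |x - y|) (hB : ∀ x, u x ≤ B)
    (hτ : τ ≤ B) (hδ : 0 < δ) (hδR : 2 * δ ≤ R) (hρ : 0 < ρ) (hη : 0 < η) (hη1 : η ≤ 1) :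
    ∃ S : ConcaveSpline, S.knots.Nonempty ∧ (∀ z ∈ S.knots, z ∈ Ioo 0 R) ∧
      (S.knots : Set ℝ).Pairwise (fun z z' ↦ δ ≤ |z - z'|) ∧
      (S.knots.card : ℝ) ≤ (R + 2 * (B - τ)) / ρ + 2 * arsinh K / η + 2 ∧
      ∀ y ∈ Icc 0 R, S y ≤ u y ∧
        (τ + 2 * (K * δ) ≤ u y → u y - S y ≤ 2 * η * (ρ + 2 * ((K + 1) * δ)) + 2 * (K * δ)) := by
  have hK : 0 ≤ K := by simpa using (abs_nonneg _).trans (hlip 1 0)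
  obtain ⟨M, hM, hδd, hdδ⟩ := exists_nat_div_mem_Icc hδ hδR
  set d := R / (M + 1 : ℕ) with hd
  have hd0 : 0 < d := hδ.trans_le hδd
  have hR : (M + 1 : ℕ) * d = R := by rw [hd]; field_simp
  have hKd : K * d ≤ 2 * (K * δ) := by linarith [mul_le_mul_of_nonneg_left hdδ hK]
  obtain ⟨S, hne, hlattice, hcard, happrox⟩ :=
    exists_concaveSpline_approx hu hlip hB hτ hd0 hρ hη hη1 hM
  refine ⟨S, hne, fun z hz ↦ ?_, fun z hz z' hz' hzz' ↦ ?_, hcard.trans ?_, fun y hy ↦ ?_⟩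
  · obtain ⟨j, hj0, hjM, rfl⟩ := hlattice z hz
    exact ⟨by positivity, hR ▸ by gcongr⟩
  · obtain ⟨i, -, -, rfl⟩ := hlattice z hz
    obtain ⟨j, -, -, rfl⟩ := hlattice z' hz'
    have hij : (1 : ℝ) ≤ |(i : ℝ) - j| := by
      exact_mod_cast Int.one_le_abs (sub_ne_zero.2 (by rintro h; simp_all : (i : ℤ) ≠ j))
    rw [← sub_mul, abs_mul, abs_of_pos hd0]
    exact hδd.trans (le_mul_of_one_le_left hd0.le hij)
  · gcongr
    push_cast at hR
    linarith
  · refine (happrox y (hR ▸ hy)).imp_right fun hgap hgood ↦ (hgap (by linarith)).trans ?_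
    have hKd' : (K + 1) * d ≤ 2 * ((K + 1) * δ) := by linarith
    gcongr

/-! ### The squared Hellinger distance -/

section Hellinger

variable {f g : ℝ → ℝ}

theorem IsDensityFn.integrable (hf : IsDensityFn f) : Integrable f := by
  by_contra hc
  exact zero_ne_one ((integral_undef hc).symm.trans hf.2.2)

theorem hellingerSq_nonneg (f g : ℝ → ℝ) : 0 ≤ hellingerSq f g :=
  integral_nonneg fun _ ↦ sq_nonneg _

theorem integrable_sqrt_mul_sqrt (hf : Integrable f) (hg : Integrable g) (hf0 : ∀ x, 0 ≤ f x)
    (hg0 : ∀ x, 0 ≤ g x) : Integrable fun x ↦ √(f x) * √(g x) := by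
  refine (hf.add hg).mono' ((continuous_sqrt.comp_aestronglyMeasurable hf.1).mul
    (continuous_sqrt.comp_aestronglyMeasurable hg.1)) (.of_forall fun x ↦ ?_)
  rw [norm_of_nonneg (by positivity), Pi.add_apply]
  nlinarith [sq_sqrt (hf0 x), sq_sqrt (hg0 x), sq_nonneg (√(f x) - √(g x)), hf0 x, hg0 x]

theorem hellingerSq_eq (hf : Integrable f) (hg : Integrable g) (hf0 : ∀ x, 0 ≤ f x)
    (hg0 : ∀ x, 0 ≤ g x) :
    hellingerSq f g = (∫ x, f x) + (∫ x, g x) - 2 * ∫ x, √(f x) * √(g x) := by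
  have hsq (x : ℝ) : (√(f x) - √(g x)) ^ 2 = f x + g x - 2 * (√(f x) * √(g x)) := by
    rw [sub_sq, sq_sqrt (hf0 x), sq_sqrt (hg0 x)]; ring
  simp_rw [hellingerSq, hsq]
  rw [integral_sub (hf.fun_add hg) ((integrable_sqrt_mul_sqrt hf hg hf0 hg0).const_mul 2),
    integral_add hf hg, integral_const_mul]

theorem hellingerSq_div_integral_le (hf : IsDensityFn f) (hg : Integrable g) (hg0 : ∀ x, 0 ≤ g x)
    (hZ : 0 < ∫ x, g x) :
    hellingerSq f (fun x ↦ g x / ∫ y, g y) ≤ 2 * hellingerSq f g := by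
  set Z := ∫ x, g x with hZdef
  set s := √Z with hs
  have hs0 : 0 < s := sqrt_pos.2 hZ
  have hsZ : s ^ 2 = Z := sq_sqrt hZ.le
  set r := (∫ x, √(f x) * √(g x)) / s with hr
  have hr0 : 0 ≤ r := div_nonneg (integral_nonneg fun _ ↦ by positivity) hs0.le
  have hunnormalized : hellingerSq f g = 1 + s ^ 2 - 2 * (s * r) := by
    rw [hellingerSq_eq hf.integrable hg hf.2.1 hg0, hf.2.2, hsZ, hr, mul_div_cancel₀ _ hs0.ne']
  have hnormalized : hellingerSq f (fun x ↦ g x / Z) = 2 - 2 * r := by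
    rw [hellingerSq_eq hf.integrable (hg.div_const Z) hf.2.1 fun x ↦ div_nonneg (hg0 x) hZ.le]
    simp_rw [sqrt_div (hg0 _), ← mul_div_assoc]
    rw [integral_div, integral_div, ← hZdef, div_self hZ.ne', hf.2.2, ← hs, ← hr]
    ring
  have hr1 : r ≤ 1 := by linarith [hnormalized ▸ hellingerSq_nonneg f fun x ↦ g x / Z]
  rw [hunnormalized, hnormalized]
  linarith [sq_nonneg (s - r), mul_nonneg hr0 (sub_nonneg.2 hr1),
    show 2 * (1 + s ^ 2 - 2 * (s * r)) - (2 - 2 * r) = 2 * (s - r) ^ 2 + 2 * (r * (1 - r)) by ring]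

theorem sq_sqrt_exp_sub_sqrt_exp_le {w φ E : ℝ} (hφ : φ ≤ w) (hE : w - φ ≤ E) :
    (√(exp w) - √(exp φ)) ^ 2 ≤ E ^ 2 * exp w := by
  have hsplit : √(exp φ) = √(exp w) * exp (-((w - φ) / 2)) := by
    rw [← exp_half, ← exp_half, ← exp_add]; ring_nf
  have hexp : 1 - (w - φ) / 2 ≤ exp (-((w - φ) / 2)) := by
    linarith [add_one_le_exp (-((w - φ) / 2))]
  have hdiff : √(exp w) - √(exp φ) ≤ E * √(exp w) := by
    rw [hsplit]
    nlinarith [sqrt_nonneg (exp w)]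
  calc (√(exp w) - √(exp φ)) ^ 2 ≤ (E * √(exp w)) ^ 2 := by
        have : √(exp φ) ≤ √(exp w) := by gcongr
        gcongr
    _ = E ^ 2 * exp w := by rw [mul_pow, sq_sqrt (exp_pos w).le]

theorem sq_sqrt_sub_sqrt_exp_le {a w φ E t X : ℝ} (ha : 0 ≤ a) (haw : a ≤ exp w)
    (hwX : exp w ≤ a + X) (hφ : φ ≤ w) (hgood : t ≤ w → w - φ ≤ E) :
    (√a - √(exp φ)) ^ 2 ≤ (2 + 2 * E ^ 2) * X + 2 * E ^ 2 * a + 2 * exp t := by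
  have hsqw : √(exp w) ^ 2 = exp w := sq_sqrt (exp_pos _).le
  have hsqa : √a ^ 2 = a := sq_sqrt ha
  have hupper : (√(exp w) - √a) ^ 2 ≤ X := by
    nlinarith [sqrt_nonneg a, sqrt_le_sqrt haw]
  have hlower : (√(exp w) - √(exp φ)) ^ 2 ≤ E ^ 2 * exp w + exp t := by
    rcases le_or_gt t w with htw | hwt
    · linarith [sq_sqrt_exp_sub_sqrt_exp_le hφ (hgood htw), exp_pos t]
    · have hφw : √(exp φ) ≤ √(exp w) := by gcongr
      have hE0 : 0 ≤ E ^ 2 * exp w := by positivity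
      nlinarith [sqrt_nonneg (exp φ), exp_le_exp.2 hwt.le]
  have htri : (√a - √(exp φ)) ^ 2 ≤ 2 * (√(exp w) - √a) ^ 2 + 2 * (√(exp w) - √(exp φ)) ^ 2 := by
    linarith [sq_nonneg ((√(exp w) - √a) + (√(exp w) - √(exp φ)))]
  linarith [mul_le_mul_of_nonneg_left hwX (sq_nonneg E)]

theorem hellingerSq_indicator_exp_le {w φ T X : ℝ → ℝ} {s : Set ℝ} {E t : ℝ}
    (hs : MeasurableSet s) (hs' : volume s ≠ ⊤) (hf : IsDensityFn f)
    (hT : Integrable T) (hT0 : ∀ x, 0 ≤ T x) (hfT : ∀ x ∉ s, f x ≤ T x)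
    (hX : Integrable X) (hX0 : ∀ x, 0 ≤ X x) (hfw : ∀ x ∈ s, f x ≤ exp (w x))
    (hwX : ∀ x ∈ s, exp (w x) ≤ f x + X x) (hφ : ∀ x ∈ s, φ x ≤ w x)
    (hgood : ∀ x ∈ s, t ≤ w x → w x - φ x ≤ E) :
    hellingerSq f (s.indicator fun x ↦ exp (φ x)) ≤
      (∫ x, T x) + (2 + 2 * E ^ 2) * (∫ x, X x) + 2 * E ^ 2 + 2 * exp t * volume.real s := by
  have hone : Integrable (s.indicator (1 : ℝ → ℝ)) :=
    (integrable_indicator_iff hs).2 (integrableOn_const hs')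
  have hX' := hX.const_mul (2 + 2 * E ^ 2)
  have hf' := hf.integrable.const_mul (2 * E ^ 2)
  have hpointwise (x : ℝ) : (√(f x) - √(s.indicator (fun x ↦ exp (φ x)) x)) ^ 2 ≤
      T x + (2 + 2 * E ^ 2) * X x + 2 * E ^ 2 * f x + 2 * exp t * s.indicator 1 x := by
    by_cases hx : x ∈ s
    · have := sq_sqrt_sub_sqrt_exp_le (hf.2.1 x) (hfw x hx) (hwX x hx) (hφ x hx) (hgood x hx)
      simp only [indicator_of_mem hx, Pi.one_apply]
      linarith [hT0 x]
    · have hX0' : 0 ≤ (2 + 2 * E ^ 2) * X x := mul_nonneg (by positivity) (hX0 x)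
      have hf0' : 0 ≤ 2 * E ^ 2 * f x := mul_nonneg (by positivity) (hf.2.1 x)
      simp only [indicator_of_notMem hx, sqrt_zero, sub_zero, sq_sqrt (hf.2.1 x)]
      linarith [hfT x hx]
  calc hellingerSq f (s.indicator fun x ↦ exp (φ x))
      ≤ ∫ x, (T x + (2 + 2 * E ^ 2) * X x + 2 * E ^ 2 * f x + 2 * exp t * s.indicator 1 x) :=
        integral_mono_of_nonneg (.of_forall fun _ ↦ sq_nonneg _)
          (((hT.add hX').add hf').add (hone.const_mul _)) (.of_forall hpointwise)
    _ = _ := by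
        rw [integral_add ((hT.fun_add hX').fun_add hf') (hone.const_mul _),
          integral_add (hT.fun_add hX') hf', integral_add hT hX', integral_const_mul,
          integral_const_mul, integral_const_mul, hf.2.2, integral_indicator_one hs, mul_one]

end Hellinger

/-! ### Log-concave densities with spline logarithm -/

theorem exists_eq_const_mul_probability {ι : Type*} [Fintype ι] [Nonempty ι] {w : ι → ℝ}
    (hw : ∀ i, 0 ≤ w i) :
    ∃ (γ : ℝ) (p : ι → ℝ), 0 ≤ γ ∧ (∀ i, 0 ≤ p i) ∧ ∑ i, p i = 1 ∧ ∀ i, γ * p i = w i := by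
  rcases (Finset.sum_nonneg fun i (_ : i ∈ Finset.univ) ↦ hw i).eq_or_lt with h | h
  · have hzero (i : ι) : w i = 0 :=
      (Finset.sum_eq_zero_iff_of_nonneg fun i _ ↦ hw i).1 h.symm i (Finset.mem_univ i)
    exact ⟨0, fun _ ↦ 1 / Fintype.card ι, le_rfl, fun _ ↦ by positivity, by simp,
      fun i ↦ by simp [hzero i]⟩
  · exact ⟨∑ i, w i, fun i ↦ w i / ∑ i, w i, h.le, fun i ↦ div_nonneg (hw i) h.le,
      by rw [← Finset.sum_div, div_self h.ne'], fun i ↦ mul_div_cancel₀ _ h.ne'⟩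

namespace ConcaveSpline

theorem exists_mixture (S : ConcaveSpline) (hne : S.knots.Nonempty) (hpos : ∀ z ∈ S.knots, 0 < z) :
    ∃ (γ₁ γ₂ γ₃ : ℝ) (p : Fin S.knots.card → ℝ), 0 ≤ γ₁ ∧ (∀ i, 0 ≤ p i) ∧ ∑ i, p i = 1 ∧
      ∀ y, S y = γ₁ * (∑ i, min (S.knots.orderEmbOfFin rfl i) y / S.knots.orderEmbOfFin rfl i * p i)
        - γ₂ * y + γ₃ := by
  have : Nonempty (Fin S.knots.card) := Fin.pos_iff_nonempty.1 hne.card_pos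
  set z := S.knots.orderEmbOfFin rfl
  have hzpos (i : Fin S.knots.card) : 0 < z i := hpos _ (S.knots.orderEmbOfFin_mem rfl i)
  obtain ⟨γ, p, hγ, hp0, hp1, hγp⟩ := exists_eq_const_mul_probability
    (w := fun i ↦ S.weight (z i) * z i) fun i ↦ mul_nonneg (S.weight_nonneg _) (hzpos i).le
  refine ⟨γ, -S.slope, S.offset, p, hγ, hp0, hp1, fun y ↦ ?_⟩
  have hsum : ∑ x ∈ S.knots, S.weight x * min x y = γ * ∑ i, min (z i) y / z i * p i :=
    calc ∑ x ∈ S.knots, S.weight x * min x y = ∑ i, S.weight (z i) * min (z i) y := by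
          conv_lhs => rw [← S.knots.map_orderEmbOfFin_univ rfl, Finset.sum_map]
          rfl
      _ = ∑ i, min (z i) y / z i * (γ * p i) := by
          refine Finset.sum_congr rfl fun i _ ↦ ?_
          have := (hzpos i).ne'
          rw [hγp]
          field_simp
      _ = γ * ∑ i, min (z i) y / z i * p i := by
          rw [Finset.mul_sum]
          exact Finset.sum_congr rfl fun i _ ↦ by ring
  simp only [hsum]
  ring

/-- The log-concave function supported on `[-L, L]` whose logarithm there is the spline `S`; the
abscissa of `S` is measured from the left end point `-L`. -/
noncomputable def truncExp (S : ConcaveSpline) (L : ℝ) : ℝ → ℝ :=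
  (Icc (-L) L).indicator fun x ↦ exp (S (x + L))

/-- The spline `S` shifted by a constant so that `truncExp` gets integral one. -/
noncomputable def normalize (S : ConcaveSpline) (L : ℝ) : ConcaveSpline :=
  { S with offset := S.offset - log (∫ x, S.truncExp L x) }

variable (S : ConcaveSpline) {L : ℝ}

theorem truncExp_nonneg (x : ℝ) : 0 ≤ S.truncExp L x :=
  indicator_nonneg (fun _ _ ↦ (exp_pos _).le) x

theorem support_truncExp : Function.support (S.truncExp L) = Icc (-L) L :=
  support_indicator.trans
    (inter_eq_left.2 fun _ _ ↦ (exp_pos _).ne')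

theorem continuous_exp_comp_add : Continuous fun x ↦ exp (S (x + L)) :=
  continuous_exp.comp (S.continuous.comp (continuous_add_const L))

theorem measurable_truncExp : Measurable (S.truncExp L) :=
  S.continuous_exp_comp_add.measurable.indicator measurableSet_Icc

theorem integrable_truncExp : Integrable (S.truncExp L) :=
  (integrable_indicator_iff measurableSet_Icc).2 S.continuous_exp_comp_add.integrableOn_Icc

theorem integral_truncExp_pos (hL : 0 < L) : 0 < ∫ x, S.truncExp L x := by
  rw [integral_pos_iff_support_of_nonneg S.truncExp_nonneg S.integrable_truncExp, support_truncExp,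
    volume_Icc, ENNReal.ofReal_pos]
  linarith

theorem isLogConcaveFn_truncExp : IsLogConcaveFn (S.truncExp L) := by
  have hconc : ConcaveOn ℝ univ fun x ↦ S (x + L) := S.concaveOn.translate_left L
  have hmul := (isLogConcaveFn_indicator_one (convex_Icc (-L) L)).mul (isLogConcaveFn_exp hconc)
    (indicator_nonneg fun _ _ ↦ zero_le_one) fun _ ↦ (exp_pos _).le
  convert hmul using 1
  ext x
  simp [truncExp, indicator_apply]

theorem truncExp_normalize (hL : 0 < L) :
    (S.normalize L).truncExp L = fun x ↦ S.truncExp L x / ∫ y, S.truncExp L y := by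
  ext x
  by_cases hx : x ∈ Icc (-L) L
  · have hmem (T : ConcaveSpline) : T.truncExp L x = exp (T (x + L)) := indicator_of_mem hx _
    have happly : S.normalize L (x + L) = S (x + L) - log (∫ y, S.truncExp L y) := by
      simp only [normalize]; ring
    rw [hmem, happly, exp_sub, exp_log (S.integral_truncExp_pos hL), hmem]
  · have hnotMem (T : ConcaveSpline) : T.truncExp L x = 0 := indicator_of_notMem hx _
    rw [hnotMem, hnotMem, zero_div]

theorem isDensityFn_truncExp_normalize (hL : 0 < L) :
    IsDensityFn ((S.normalize L).truncExp L) := by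
  refine ⟨measurable_truncExp _, truncExp_nonneg _, ?_⟩
  rw [truncExp_normalize S hL, integral_div, div_self (S.integral_truncExp_pos hL).ne']

end ConcaveSpline

/-! ### Approximation of densities with exponential envelope -/

theorem integral_exp_neg_mul_abs_sub {K : ℝ} (hK : 0 < K) (q : ℝ) :
    ∫ x, exp (-(K * |x - q|)) = 2 / K := by
  simp_rw [← neg_mul]
  rw [integral_sub_right_eq_self (fun x ↦ exp (-K * |x|)) q,
    integral_comp_abs (f := fun x ↦ exp (-K * x)), integral_exp_mul_Ioi (neg_lt_zero.2 hK) 0]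
  simp [div_eq_mul_inv]

theorem integrable_exp_neg_mul_abs_sub {K : ℝ} (hK : 0 < K) (q : ℝ) :
    Integrable fun x ↦ exp (-(K * |x - q|)) := by
  by_contra hc
  exact (show 0 < 2 / K by positivity).ne
    ((integral_undef hc).symm.trans (integral_exp_neg_mul_abs_sub hK q))

theorem integrable_exp_neg_mul_abs {K : ℝ} (hK : 0 < K) : Integrable fun x ↦ exp (-(K * |x|)) := by
  simpa using integrable_exp_neg_mul_abs_sub hK 0

theorem integral_mul_exp_neg_half_mul_abs {α : ℝ} (hα : 0 < α) (A : ℝ) :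
    ∫ x, A * exp (-(α / 2 * |x|)) = 4 / α * A := by
  have h := integral_exp_neg_mul_abs_sub (half_pos hα) 0
  simp only [sub_zero] at h
  rw [integral_const_mul, h]
  field_simp
  ring

namespace MemF

variable {α β K L τ δ ρ η E : ℝ} {f : ℝ → ℝ}

theorem le_exp (hf : MemF α β f) (hα : 0 ≤ α) (x : ℝ) : f x ≤ exp β :=
  (hf.2.2.2 x).trans (exp_le_exp.2 (by linarith [mul_nonneg hα (abs_nonneg x)]))

theorem le_of_notMem_Icc (hf : MemF α β f) (hα : 0 ≤ α) {x : ℝ} (hx : x ∉ Icc (-L) L) :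
    f x ≤ exp (β - α / 2 * L) * exp (-(α / 2 * |x|)) := by
  have hxL : L ≤ |x| := by
    by_contra! h
    exact hx (abs_le.1 h.le)
  refine (hf.2.2.2 x).trans ?_
  rw [← exp_add, exp_le_exp]
  linarith [mul_le_mul_of_nonneg_left hxL (show 0 ≤ α / 2 by positivity)]

theorem exists_pos_mem_Icc (hf : MemF α β f) (hα : 0 < α)
    (htail : 4 / α * exp (β - α / 2 * L) < 1) : ∃ x ∈ Icc (-L) L, 0 < f x := by
  by_contra! hzero
  have hle : ∫ x, f x ≤ ∫ x, exp (β - α / 2 * L) * exp (-(α / 2 * |x|)) := by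
    refine integral_mono hf.1.integrable
      ((integrable_exp_neg_mul_abs (half_pos hα)).const_mul _) fun x ↦ ?_
    by_cases hx : x ∈ Icc (-L) L
    · exact (hzero x hx).trans (by positivity)
    · exact hf.le_of_notMem_Icc hα.le hx
  rw [hf.1.2.2, integral_mul_exp_neg_half_mul_abs hα] at hle
  exact hle.not_gt htail

theorem exists_truncExp_hellingerSq_le (hf : MemF α β f) (hα : 0 < α) (hK : 0 < K) (hτ : τ ≤ β)
    (hδ : 0 < δ) (hδL : δ ≤ L) (hρ : 0 < ρ) (hη : 0 < η) (hη1 : η ≤ 1)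
    (htail : 4 / α * exp (β - α / 2 * L) < 1)
    (hE : 2 * η * (ρ + 2 * ((K + 1) * δ)) + 2 * (K * δ) ≤ E) :
    ∃ S : ConcaveSpline, S.knots.Nonempty ∧ (∀ z ∈ S.knots, z ∈ Ioo 0 (2 * L)) ∧
      (S.knots : Set ℝ).Pairwise (fun z z' ↦ δ ≤ |z - z'|) ∧
      (S.knots.card : ℝ) ≤ (2 * L + 2 * (β - τ)) / ρ + 2 * arsinh K / η + 2 ∧
      hellingerSq f (S.truncExp L) ≤ 4 / α * exp (β - α / 2 * L) +
        (2 + 2 * E ^ 2) * (exp β * (4 / K)) + 2 * E ^ 2 + 2 * exp (τ + 2 * (K * δ)) * (2 * L) := by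
  obtain ⟨x₀, hx₀, hfx₀⟩ := hf.exists_pos_mem_Icc hα htail
  obtain ⟨w, hconc, hlip, hwβ, hfw, q, r, hwf⟩ := exists_concave_lipschitz_majorant isCompact_Icc
    (convex_Icc (-L) L) hf.2.1 hf.2.2.1 hf.1.2.1 (hf.le_exp hα.le) hK.le hx₀ hfx₀
  obtain ⟨S, hne, hinside, hsep, hcard, happrox⟩ := exists_separated_concaveSpline_approx
    (u := fun y ↦ w (y - L)) (R := 2 * L) (hconc.translate_left (-L))
    (fun x y ↦ by simpa using hlip (x - L) (y - L)) (fun _ ↦ exp_le_exp.1 (hwβ _)) hτ hδ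
    (by linarith) hρ hη hη1
  refine ⟨S, hne, hinside, hsep, hcard, ?_⟩
  have hS (x : ℝ) (hx : x ∈ Icc (-L) L) : S (x + L) ≤ w x ∧
      (τ + 2 * (K * δ) ≤ w x → w x - S (x + L) ≤ E) := by
    have h := happrox (x + L) ⟨by linarith [hx.1], by linarith [hx.2]⟩
    simp only [add_sub_cancel_right] at h
    exact h.imp_right fun hgap hgood ↦ (hgap hgood).trans hE
  have hq := integrable_exp_neg_mul_abs_sub hK q
  have hr := integrable_exp_neg_mul_abs_sub hK r
  have hX : ∫ x, exp β * (exp (-(K * |x - q|)) + exp (-(K * |x - r|))) = exp β * (4 / K) := by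
    rw [integral_const_mul, integral_add hq hr, integral_exp_neg_mul_abs_sub hK,
      integral_exp_neg_mul_abs_sub hK]
    ring
  have hvol : volume.real (Icc (-L) L) = 2 * L := by
    rw [volume_real_Icc_of_le (by linarith)]; ring
  have h := hellingerSq_indicator_exp_le measurableSet_Icc measure_Icc_lt_top.ne hf.1
    ((integrable_exp_neg_mul_abs (half_pos hα)).const_mul (exp (β - α / 2 * L)))
    (fun _ ↦ by positivity) (fun x ↦ hf.le_of_notMem_Icc hα.le) ((hq.fun_add hr).const_mul (exp β))
    (fun _ ↦ by positivity) hfw (fun x _ ↦ hwf x) (fun x hx ↦ (hS x hx).1)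
    (fun x hx ↦ (hS x hx).2)
  rwa [integral_mul_exp_neg_half_mul_abs hα, hvol, hX] at h

end MemF

/-! ### Choice of scales -/

theorem arsinh_le_two_add_log {x : ℝ} (hx : 1 ≤ x) : arsinh x ≤ 2 + log x := by
  have hsqrt : √(1 + x ^ 2) ≤ 2 * x := sqrt_le_iff.2 ⟨by linarith, by nlinarith⟩
  have hexp : (3 : ℝ) ≤ exp 2 := by linarith [add_one_le_exp (2 : ℝ)]
  have hthree : 3 * x ≤ exp 2 * x := by gcongr
  calc arsinh x ≤ log (exp 2 * x) := log_le_log (by positivity) (by linarith)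
    _ = 2 + log x := by rw [log_mul (exp_ne_zero 2) (by linarith), log_exp]

theorem rpow_neg_div_five {x : ℝ} (hx : 0 ≤ x) (k : ℕ) :
    x ^ (-(k : ℝ) / 5) = ((x ^ ((1 : ℝ) / 5)) ^ k)⁻¹ := by
  rw [← rpow_natCast, ← rpow_mul hx, ← rpow_neg hx]
  congr 1
  ring

/-- The sample-size condition under which the approximation bounds hold, in terms of
`h = n ^ (1 / 5)` and `l = log n`: all powers of `h` and `l` below are then comparable with the
target rate up to constants. -/
structure IsLargeScale (α β h l : ℝ) : Prop where
  one_le : 1 ≤ h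
  one_le_log : 1 ≤ l
  log_eq : l = 5 * log h
  abs_le_log : |β| ≤ l
  le_scale : α ≤ h
  tail_lt_scale : 4 / α * exp β < h
  log_le_sq : 12 * l ≤ h ^ 2

theorem eventually_isLargeScale (α β : ℝ) :
    ∀ᶠ h : ℝ in Filter.atTop, IsLargeScale α β h (5 * log h) := by
  have hlog : Filter.Tendsto (fun h : ℝ ↦ 5 * log h) Filter.atTop Filter.atTop :=
    tendsto_log_atTop.const_mul_atTop (by norm_num)
  have hsq := (isLittleO_log_rpow_atTop (two_pos : (0 : ℝ) < 2)).bound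
    (show (0 : ℝ) < 1 / 60 by norm_num)
  filter_upwards [Filter.eventually_ge_atTop 1, hlog.eventually_ge_atTop 1,
    hlog.eventually_ge_atTop |β|, Filter.eventually_ge_atTop α,
    Filter.eventually_gt_atTop (4 / α * exp β), hsq] with h hone hlogone hβ hα htail hlogsq
  refine ⟨hone, hlogone, rfl, hβ, hα, htail, ?_⟩
  rw [norm_of_nonneg (by linarith), norm_of_nonneg (by positivity), rpow_two] at hlogsq
  linarith

theorem eventually_isLargeScale_natCast (α β : ℝ) :
    ∀ᶠ n : ℕ in Filter.atTop, IsLargeScale α β ((n : ℝ) ^ ((1 : ℝ) / 5)) (log n) := by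
  have hroot : Filter.Tendsto (fun n : ℕ ↦ (n : ℝ) ^ ((1 : ℝ) / 5)) Filter.atTop Filter.atTop :=
    (tendsto_rpow_atTop (by norm_num)).comp tendsto_natCast_atTop_atTop
  filter_upwards [hroot.eventually (eventually_isLargeScale α β), Filter.eventually_gt_atTop 0]
    with n hn hn0
  rwa [log_rpow (by exact_mod_cast hn0), ← mul_assoc, mul_one_div_cancel (by norm_num),
    one_mul] at hn

namespace IsLargeScale

variable {α β h l : ℝ}

theorem scale_pos (hs : IsLargeScale α β h l) : 0 < h := one_pos.trans_le hs.one_le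

theorem log_pos (hs : IsLargeScale α β h l) : 0 < l := one_pos.trans_le hs.one_le_log

theorem exp_log_div_five (hs : IsLargeScale α β h l) : exp (l / 5) = h := by
  rw [hs.log_eq, mul_div_cancel_left₀ _ (by norm_num), exp_log hs.scale_pos]

theorem exp_neg_log (hs : IsLargeScale α β h l) : exp (-l) = 1 / h ^ 5 := by
  rw [← hs.exp_log_div_five, ← exp_nat_mul, one_div, ← exp_neg]
  congr 1
  push_cast
  ring

theorem exp_tail (hs : IsLargeScale α β h l) (hα : 0 < α) :
    exp (β - α / 2 * (8 / (5 * α) * l)) = exp β * (1 / h ^ 4) := by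
  rw [← hs.exp_log_div_five, ← exp_nat_mul, one_div, ← exp_neg, ← exp_add]
  congr 1
  field_simp
  ring

theorem tail_lt_one (hs : IsLargeScale α β h l) (hα : 0 < α) :
    4 / α * exp (β - α / 2 * (8 / (5 * α) * l)) < 1 := by
  have hpos := hs.scale_pos
  rw [hs.exp_tail hα, ← mul_assoc, mul_one_div, div_lt_one (by positivity)]
  exact hs.tail_lt_scale.trans_le (le_self_pow₀ hs.one_le (by norm_num))

theorem spacing_le (hs : IsLargeScale α β h l) (hα : 0 < α) : l / h ^ 6 ≤ 8 / (5 * α) * l := by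
  have hpow : h ≤ h ^ 6 := le_self_pow₀ hs.one_le (by norm_num)
  have hl := hs.log_pos
  have hαh : (h ^ 6)⁻¹ ≤ α⁻¹ := by gcongr; exact hs.le_scale.trans hpow
  calc l / h ^ 6 = (h ^ 6)⁻¹ * l := by ring
    _ ≤ α⁻¹ * l := by gcongr
    _ ≤ 8 / 5 * (α⁻¹ * l) := le_mul_of_one_le_left (by positivity) (by norm_num)
    _ = 8 / (5 * α) * l := by field_simp

theorem gap_le (hs : IsLargeScale α β h l) :
    2 * (1 / h) * (l / h + 2 * ((h ^ 4 + 1) * (l / h ^ 6))) + 2 * (h ^ 4 * (l / h ^ 6)) ≤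
      12 * (l / h ^ 2) := by
  have hpos := hs.scale_pos
  have hl := hs.log_pos
  have hinv : 1 / h ≤ 1 := (div_le_one hpos).2 hs.one_le
  have hsmall : l / h ^ 6 ≤ l / h ^ 2 := by gcongr; exacts [hs.one_le, by norm_num]
  have hmul : h ^ 4 * (l / h ^ 6) = l / h ^ 2 := by field_simp
  calc _ = 2 * (l / h ^ 2) + 4 * (1 / h * (l / h ^ 2 + l / h ^ 6)) + 2 * (l / h ^ 2) := by
        rw [← hmul]; field_simp; ring
    _ ≤ 2 * (l / h ^ 2) + 4 * (1 * (l / h ^ 2 + l / h ^ 2)) + 2 * (l / h ^ 2) := by gcongr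
    _ = 12 * (l / h ^ 2) := by ring

theorem card_le (hs : IsLargeScale α β h l) (hα : 0 < α) :
    (2 * (8 / (5 * α) * l) + 2 * (β - -l)) / (l / h) + 2 * arsinh (h ^ 4) / (1 / h) + 2 ≤
      (16 / (5 * α) + 12) * (h * l) := by
  have hpos := hs.scale_pos
  have hl := hs.log_pos
  have hhl : h ≤ h * l := le_mul_of_one_le_right hpos.le hs.one_le_log
  have hlattice : (2 * (8 / (5 * α) * l) + 2 * (β - -l)) / (l / h) ≤ (16 / (5 * α) + 4) * h := by
    have hβ : β ≤ l := (le_abs_self β).trans hs.abs_le_log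
    calc _ ≤ (2 * (8 / (5 * α) * l) + 2 * (l - -l)) / (l / h) := by gcongr
      _ = (16 / (5 * α) + 4) * h := by field_simp; ring
  have harsinh : 2 * arsinh (h ^ 4) / (1 / h) ≤ 4 * h + 2 * (h * l) := by
    have harsinh_le := arsinh_le_two_add_log (one_le_pow₀ (n := 4) hs.one_le)
    rw [log_pow] at harsinh_le
    have hlog : arsinh (h ^ 4) ≤ 2 + l := by
      push_cast at harsinh_le
      linarith [hs.log_eq]
    calc _ = 2 * h * arsinh (h ^ 4) := by field_simp
      _ ≤ 2 * h * (2 + l) := by gcongr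
      _ = 4 * h + 2 * (h * l) := by ring
  have hα' : 16 / (5 * α) * h ≤ 16 / (5 * α) * (h * l) := by gcongr
  linarith [hs.one_le]

theorem one_div_pow_four_le (hs : IsLargeScale α β h l) : 1 / h ^ 4 ≤ (l / h ^ 2) ^ 2 := by
  rw [div_pow, ← pow_mul]
  have := hs.scale_pos
  gcongr
  exact one_le_pow₀ hs.one_le_log

theorem div_pow_five_le (hs : IsLargeScale α β h l) : l / h ^ 5 ≤ (l / h ^ 2) ^ 2 := by
  rw [div_pow, ← pow_mul]
  have := hs.scale_pos
  gcongr
  exacts [le_self_pow₀ hs.one_le_log two_ne_zero, hs.one_le, by norm_num]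

theorem exp_low_level_le (hs : IsLargeScale α β h l) :
    exp (-l + 2 * (h ^ 4 * (l / h ^ 6))) ≤ exp 1 * (1 / h ^ 5) := by
  have hpos := hs.scale_pos
  have hshift : 2 * (h ^ 4 * (l / h ^ 6)) ≤ 1 := by
    rw [show 2 * (h ^ 4 * (l / h ^ 6)) = 2 * l / h ^ 2 by field_simp, div_le_one (by positivity)]
    linarith [hs.log_le_sq, hs.log_pos]
  rw [← hs.exp_neg_log, ← exp_add, exp_le_exp]
  linarith

theorem hellinger_error_le (hs : IsLargeScale α β h l) (hα : 0 < α) :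
    4 / α * exp (β - α / 2 * (8 / (5 * α) * l)) +
        (2 + 2 * (12 * (l / h ^ 2)) ^ 2) * (exp β * (4 / h ^ 4)) + 2 * (12 * (l / h ^ 2)) ^ 2 +
        2 * exp (-l + 2 * (h ^ 4 * (l / h ^ 6))) * (2 * (8 / (5 * α) * l)) ≤
      (4 / α * exp β + 16 * exp β + 288 + 32 / (5 * α) * exp 1) * (l / h ^ 2) ^ 2 := by
  have hpos := hs.scale_pos
  have hl := hs.log_pos
  have htail : 4 / α * exp (β - α / 2 * (8 / (5 * α) * l)) ≤
      4 / α * exp β * (l / h ^ 2) ^ 2 := by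
    rw [hs.exp_tail hα, ← mul_assoc]
    gcongr
    exact hs.one_div_pow_four_le
  have hboundary : (2 + 2 * (12 * (l / h ^ 2)) ^ 2) * (exp β * (4 / h ^ 4)) ≤
      16 * exp β * (l / h ^ 2) ^ 2 := by
    have hgap : (12 * (l / h ^ 2)) ^ 2 ≤ 1 := by
      refine pow_le_one₀ (by positivity) ?_
      rw [← mul_div_assoc, div_le_one (by positivity)]
      exact hs.log_le_sq
    calc _ ≤ (2 + 2 * 1) * (exp β * (4 / h ^ 4)) := by gcongr
      _ = 16 * exp β * (1 / h ^ 4) := by ring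
      _ ≤ _ := by gcongr; exact hs.one_div_pow_four_le
  have hlow : 2 * exp (-l + 2 * (h ^ 4 * (l / h ^ 6))) * (2 * (8 / (5 * α) * l)) ≤
      32 / (5 * α) * exp 1 * (l / h ^ 2) ^ 2 :=
    calc _ ≤ 2 * (exp 1 * (1 / h ^ 5)) * (2 * (8 / (5 * α) * l)) := by
          gcongr; exact hs.exp_low_level_le
      _ = 32 / (5 * α) * exp 1 * (l / h ^ 5) := by ring
      _ ≤ _ := by gcongr; exact hs.div_pow_five_le
  linarith

end IsLargeScale

/-- The constant `C(α, β)` of the approximation theorem, large enough to serve for both the number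
of knots and the squared Hellinger distance. -/
noncomputable def rateConst (α β : ℝ) : ℝ :=
  2 * (4 / α * exp β + 16 * exp β + 288 + 32 / (5 * α) * exp 1) + (16 / (5 * α) + 12)

theorem rateConst_pos {α : ℝ} (hα : 0 < α) (β : ℝ) : 0 < rateConst α β := by
  unfold rateConst
  positivity

theorem MemF.exists_truncExp_isDensityFn {α β h l : ℝ} {f : ℝ → ℝ} (hf : MemF α β f) (hα : 0 < α)
    (hs : IsLargeScale α β h l) :
    ∃ S : ConcaveSpline, S.knots.Nonempty ∧ (∀ z ∈ S.knots, z ∈ Ioo 0 (2 * (8 / (5 * α)) * l)) ∧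
      (S.knots : Set ℝ).Pairwise (fun z z' ↦ (h ^ 6)⁻¹ * l ≤ |z - z'|) ∧
      (S.knots.card : ℝ) ≤ rateConst α β * h * l ∧
      IsDensityFn (S.truncExp (8 / (5 * α) * l)) ∧
      hellingerSq f (S.truncExp (8 / (5 * α) * l)) ≤ rateConst α β * l ^ 2 * (h ^ 4)⁻¹ := by
  have hpos := hs.scale_pos
  have hl := hs.log_pos
  have hL : 0 < 8 / (5 * α) * l := by positivity
  obtain ⟨S, hne, hinside, hsep, hcard, hhell⟩ := hf.exists_truncExp_hellingerSq_le (K := h ^ 4)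
    (δ := l / h ^ 6) (ρ := l / h) (η := 1 / h) hα (by positivity) (abs_le.1 hs.abs_le_log).1
    (by positivity) (hs.spacing_le hα) (by positivity) (by positivity)
    ((div_le_one hpos).2 hs.one_le) (hs.tail_lt_one hα) hs.gap_le
  rw [← mul_assoc] at hinside
  rw [div_eq_inv_mul] at hsep
  refine ⟨S.normalize (8 / (5 * α) * l), hne, hinside, hsep, ?_,
    S.isDensityFn_truncExp_normalize hL, ?_⟩
  · rw [mul_assoc]
    refine (hcard.trans (hs.card_le hα)).trans ?_
    gcongr
    exact le_add_of_nonneg_left (by positivity)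
  · rw [S.truncExp_normalize hL]
    calc _ ≤ 2 * hellingerSq f (S.truncExp (8 / (5 * α) * l)) :=
          hellingerSq_div_integral_le hf.1 S.integrable_truncExp S.truncExp_nonneg
            (S.integral_truncExp_pos hL)
      _ ≤ 2 * (4 / α * exp β + 16 * exp β + 288 + 32 / (5 * α) * exp 1) * (l / h ^ 2) ^ 2 := by
          rw [mul_assoc]
          gcongr
          exact hhell.trans (hs.hellinger_error_le hα)
      _ ≤ rateConst α β * (l / h ^ 2) ^ 2 := by
          gcongr
          exact le_add_of_nonneg_right (by positivity)
      _ = rateConst α β * l ^ 2 * (h ^ 4)⁻¹ := by ring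

/-- Corollary: for `f₀ ∈ F_{α,β}` and `n ≥ n₀(α,β)` there is a
log-concave density `f̄ₙ` supported on `[−(8/(5α)) log n, (8/(5α)) log n]`, piecewise
log-linear with at most `C(α,β) n^{1/5} log n` knots (given through its explicit
mixture representation), with `h²(f₀, f̄ₙ) ≤ C(α,β) (log n)² n^{−4/5}`, and whose
knots are `c n^{−6/5} log n`-separated for a universal constant `c > 0`. -/
theorem piecewise_loglinear_approximation_corollary :
    ∃ c : ℝ, 0 < c ∧
      ∀ α : ℝ, 0 < α → ∀ β : ℝ,
        ∃ C : ℝ, 0 < C ∧ ∃ n₀ : ℕ,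
          ∀ f₀ : ℝ → ℝ, MemF α β f₀ →
            ∀ n : ℕ, n₀ ≤ n →
              ∃ (N : ℕ) (z : Fin N → ℝ) (fbar : ℝ → ℝ),
                -- f̄ₙ is a log-concave density
                IsDensityFn fbar ∧ IsLogConcaveFn fbar ∧
                -- supported on [−(8/(5α)) log n, (8/(5α)) log n]
                {x : ℝ | fbar x ≠ 0} ⊆
                  Icc (-((8 / (5 * α)) * Real.log n)) ((8 / (5 * α)) * Real.log n) ∧
                -- at most C n^{1/5} log n knots
                (N : ℝ) ≤ C * (n : ℝ) ^ ((1:ℝ)/5) * Real.log n ∧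
                StrictMono z ∧
                (∀ i, z i ∈ Icc 0 (2 * (8 / (5 * α)) * Real.log n)) ∧
                -- Hellinger approximation
                hellingerSq f₀ fbar ≤ C * (Real.log n) ^ 2 * (n : ℝ) ^ (-(4:ℝ)/5) ∧
                -- the knots are c n^{-6/5} log n separated
                (∀ i j : Fin N, i ≠ j →
                  c * (n : ℝ) ^ (-(6:ℝ)/5) * Real.log n ≤ |z i - z j|) ∧
                -- piecewise log-linear: explicit mixture representation of the
                -- log-density on the support, with kinks at the knots
                ∃ (γ₁ γ₂ γ₃ : ℝ) (p : Fin N → ℝ),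
                  0 ≤ γ₁ ∧ (∀ i, 0 ≤ p i) ∧ (∑ i, p i) = 1 ∧
                  ∀ x : ℝ,
                    fbar x = Set.indicator
                      (Icc (-((8 / (5 * α)) * Real.log n)) ((8 / (5 * α)) * Real.log n))
                      (fun y => Real.exp
                        (γ₁ * (∑ i, min (z i) (y + (8 / (5 * α)) * Real.log n) / z i * p i) -
                          γ₂ * (y + (8 / (5 * α)) * Real.log n) + γ₃)) x := by
  refine ⟨1, one_pos, fun α hα β ↦ ⟨rateConst α β, rateConst_pos hα β, ?_⟩⟩
  obtain ⟨n₀, hn₀⟩ := Filter.eventually_atTop.1 (eventually_isLargeScale_natCast α β)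
  refine ⟨n₀, fun f₀ hf n hn ↦ ?_⟩
  obtain ⟨S, hne, hinside, hsep, hcard, hdensity, hhell⟩ :=
    hf.exists_truncExp_isDensityFn hα (hn₀ n hn)
  obtain ⟨γ₁, γ₂, γ₃, p, hγ, hp, hsum, hmix⟩ := S.exists_mixture hne fun z hz ↦ (hinside z hz).1
  have hmem := S.knots.orderEmbOfFin_mem rfl
  have hfour : (n : ℝ) ^ (-(4 : ℝ) / 5) = _ := rpow_neg_div_five n.cast_nonneg 4
  have hsix : (n : ℝ) ^ (-(6 : ℝ) / 5) = _ := rpow_neg_div_five n.cast_nonneg 6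
  rw [hfour, hsix, one_mul]
  exact ⟨S.knots.card, S.knots.orderEmbOfFin rfl, S.truncExp (8 / (5 * α) * log n), hdensity,
    S.isLogConcaveFn_truncExp, S.support_truncExp.subset, hcard,
    (S.knots.orderEmbOfFin rfl).strictMono, fun i ↦ Ioo_subset_Icc_self (hinside _ (hmem i)),
    hhell, fun i j hij ↦ hsep (hmem i) (hmem j) ((S.knots.orderEmbOfFin rfl).injective.ne hij),
    γ₁, γ₂, γ₃, p, hγ, hp, hsum, fun x ↦ by simp only [← hmix]; rfl⟩
end

section
/- Let w be a continuous concave function on [u₀, u₂] and let u₀ < u₁ < u₂. Define the averages A₁ = (1/(u₁−u₀)) ∫_{u₀}^{u₁} w(s) ds and A₂ = (1/(u₂−u₁)) ∫_{u₁}^{u₂} w(s) ds, and the midpoints m₁ = (u₀+u₁)/2, m₂ = (u₁+u₂)/2. Then w′₋(u₂) ≤ (A₂ − A₁)/(m₂ − m₁) ≤ w′₊(u₀), where w′₊ and w′₋ denote the right and left derivatives of w. -/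
open MeasureTheory Real Set intervalIntegral

/-!
If `d₀ = w′₊(u₀)`, then every chord of the concave function `w` has slope at most `d₀`, that is,
`s ↦ w s - d₀ * s` is antitone. The average of an antitone function over an interval is at most its
average over any interval further to the left, and subtracting `d₀ * s` lowers an average by
exactly `d₀` times the midpoint. Rearranging gives the upper bound; the lower bound is symmetric.
-/

section SecantSlopes

variable {S : Set ℝ} {f : ℝ → ℝ} {a d : ℝ}

lemma antitoneOn_sub_mul_of_concaveOn_of_hasDerivWithinAt (hf : ConcaveOn ℝ S f)
    (ha : a ∈ S) (hd : HasDerivWithinAt f d S a) :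
    AntitoneOn (fun s ↦ f s - d * s) (S ∩ Ici a) := by
  rintro u ⟨hu, hau⟩ v ⟨hv, hav⟩ huv
  rcases huv.eq_or_lt with rfl | huv
  · rfl
  have slope_le : slope f u v ≤ d := by
    rcases (mem_Ici.1 hau).eq_or_lt with rfl | hau
    · exact hf.slope_le_of_hasDerivWithinAt ha hv huv hd
    · calc slope f u v ≤ slope f u a := hf.slope_anti hu ⟨ha, hau.ne⟩ ⟨hv, huv.ne'⟩ hav
        _ = slope f a u := slope_comm f u a
        _ ≤ d := hf.slope_le_of_hasDerivWithinAt ha hu hau hd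
  rw [slope_def_field, div_le_iff₀ (sub_pos.2 huv)] at slope_le
  linarith

lemma monotoneOn_sub_mul_of_concaveOn_of_hasDerivWithinAt (hf : ConcaveOn ℝ S f)
    (ha : a ∈ S) (hd : HasDerivWithinAt f d S a) :
    MonotoneOn (fun s ↦ f s - d * s) (S ∩ Iic a) := by
  rintro u ⟨hu, hua⟩ v ⟨hv, hva⟩ huv
  rcases huv.eq_or_lt with rfl | huv
  · rfl
  have le_slope : d ≤ slope f u v := by
    rcases (mem_Iic.1 hva).eq_or_lt with rfl | hva
    · exact hf.le_slope_of_hasDerivWithinAt hu ha huv hd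
    · calc d ≤ slope f v a := hf.le_slope_of_hasDerivWithinAt hv ha hva hd
        _ ≤ slope f v u := hf.slope_anti hv ⟨hu, huv.ne⟩ ⟨ha, hva.ne'⟩ hua
        _ = slope f u v := slope_comm f v u
  rw [slope_def_field, le_div_iff₀ (sub_pos.2 huv)] at le_slope
  linarith

end SecantSlopes

section IntervalAverages

variable {f : ℝ → ℝ} {a b c d k : ℝ}

lemma intervalAverage_mem_Icc_of_antitoneOn (hab : a < b) (hf : AntitoneOn f (Icc a b)) :
    (⨍ s in a..b, f s) ∈ Icc (f b) (f a) := by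
  rw [uIoc_of_le hab.le]
  refine (convex_Icc (f b) (f a)).set_average_mem isClosed_Icc (by simpa using hab) (by simp) ?_
    ((hf.integrableOn_isCompact isCompact_Icc).mono_set Ioc_subset_Icc_self)
  exact ae_restrict_of_forall_mem measurableSet_Ioc fun s hs ↦
    hf.mapsTo_Icc (Ioc_subset_Icc_self hs)

lemma intervalAverage_le_intervalAverage_of_antitoneOn (hab : a < b) (hbc : b ≤ c) (hcd : c < d)
    (hf : AntitoneOn f (Icc a d)) : (⨍ s in c..d, f s) ≤ ⨍ s in a..b, f s :=
  calc (⨍ s in c..d, f s) ≤ f c :=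
        (intervalAverage_mem_Icc_of_antitoneOn hcd
          (hf.mono (Icc_subset_Icc_left (hab.le.trans hbc)))).2
    _ ≤ f b := hf ⟨hab.le, hbc.trans hcd.le⟩ ⟨hab.le.trans hbc, hcd.le⟩ hbc
    _ ≤ ⨍ s in a..b, f s :=
        (intervalAverage_mem_Icc_of_antitoneOn hab
          (hf.mono (Icc_subset_Icc_right (hbc.trans hcd.le)))).1

lemma intervalAverage_le_intervalAverage_of_monotoneOn (hab : a < b) (hbc : b ≤ c) (hcd : c < d)
    (hf : MonotoneOn f (Icc a d)) : (⨍ s in a..b, f s) ≤ ⨍ s in c..d, f s := by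
  simpa only [Pi.neg_apply, average_neg, neg_le_neg_iff] using
    intervalAverage_le_intervalAverage_of_antitoneOn hab hbc hcd hf.neg

lemma intervalAverage_sub_mul (hab : a ≠ b)
    (hf : IntervalIntegrable (fun s ↦ f s - k * s) volume a b) :
    (⨍ s in a..b, (f s - k * s)) = (⨍ s in a..b, f s) - k * ((a + b) / 2) := by
  have hlin : IntervalIntegrable (fun s ↦ k * s) volume a b :=
    Continuous.intervalIntegrable (by fun_prop) a b
  have hf' : IntervalIntegrable f volume a b := by simpa using hf.add hlin
  have hba : b - a ≠ 0 := sub_ne_zero.2 hab.symm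
  rw [interval_average_eq_div, interval_average_eq_div, integral_sub hf' hlin,
    intervalIntegral.integral_const_mul, integral_id]
  field_simp
  ring

lemma slope_intervalAverage_le_of_antitoneOn (hab : a < b) (hbc : b ≤ c) (hcd : c < d)
    (hf : AntitoneOn (fun s ↦ f s - k * s) (Icc a d)) :
    ((⨍ s in c..d, f s) - ⨍ s in a..b, f s) / ((c + d) / 2 - (a + b) / 2) ≤ k := by
  have hint : IntervalIntegrable (fun s ↦ f s - k * s) volume a d :=
    AntitoneOn.intervalIntegrable (by rwa [uIcc_of_le (by linarith)])
  have havg := intervalAverage_le_intervalAverage_of_antitoneOn hab hbc hcd hf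
  rw [intervalAverage_sub_mul hab.ne (hint.mono_set (by grind [uIcc_of_le])),
    intervalAverage_sub_mul hcd.ne (hint.mono_set (by grind [uIcc_of_le]))] at havg
  rw [div_le_iff₀ (by linarith)]
  linarith

lemma le_slope_intervalAverage_of_monotoneOn (hab : a < b) (hbc : b ≤ c) (hcd : c < d)
    (hf : MonotoneOn (fun s ↦ f s - k * s) (Icc a d)) :
    k ≤ ((⨍ s in c..d, f s) - ⨍ s in a..b, f s) / ((c + d) / 2 - (a + b) / 2) := by
  have hint : IntervalIntegrable (fun s ↦ f s - k * s) volume a d :=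
    MonotoneOn.intervalIntegrable (by rwa [uIcc_of_le (by linarith)])
  have havg := intervalAverage_le_intervalAverage_of_monotoneOn hab hbc hcd hf
  rw [intervalAverage_sub_mul hab.ne (hint.mono_set (by grind [uIcc_of_le])),
    intervalAverage_sub_mul hcd.ne (hint.mono_set (by grind [uIcc_of_le]))] at havg
  rw [le_div_iff₀ (by linarith)]
  linarith

end IntervalAverages

/-- for a continuous concave function `w` on `[u₀,u₂]` with
one-sided derivatives `d₀ = w′₊(u₀)` (derivative within `[u₀,u₂]` at `u₀`) and
`d₂ = w′₋(u₂)` (derivative within `[u₀,u₂]` at `u₂`), the slope of the chord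
between the averages of `w` over `[u₀,u₁]` and `[u₁,u₂]`, placed at the
respective midpoints, lies between `d₂` and `d₀`. -/
theorem average_slope_between_one_sided_derivs (u₀ u₁ u₂ : ℝ)
    (h01 : u₀ < u₁) (h12 : u₁ < u₂)
    (w : ℝ → ℝ) (hcont : ContinuousOn w (Icc u₀ u₂))
    (hconc : ConcaveOn ℝ (Icc u₀ u₂) w)
    (d₀ d₂ : ℝ)
    (hd₀ : HasDerivWithinAt w d₀ (Icc u₀ u₂) u₀)
    (hd₂ : HasDerivWithinAt w d₂ (Icc u₀ u₂) u₂) :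
    d₂ ≤ ((1 / (u₂ - u₁)) * (∫ s in u₁..u₂, w s) -
            (1 / (u₁ - u₀)) * (∫ s in u₀..u₁, w s)) /
          ((u₁ + u₂) / 2 - (u₀ + u₁) / 2) ∧
    ((1 / (u₂ - u₁)) * (∫ s in u₁..u₂, w s) -
            (1 / (u₁ - u₀)) * (∫ s in u₀..u₁, w s)) /
          ((u₁ + u₂) / 2 - (u₀ + u₁) / 2) ≤ d₀ := by
  have hu : u₀ ≤ u₂ := (h01.trans h12).le
  have hanti : AntitoneOn (fun s ↦ w s - d₀ * s) (Icc u₀ u₂) :=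
    (antitoneOn_sub_mul_of_concaveOn_of_hasDerivWithinAt hconc (left_mem_Icc.2 hu) hd₀).mono
      (subset_inter subset_rfl Icc_subset_Ici_self)
  have hmono : MonotoneOn (fun s ↦ w s - d₂ * s) (Icc u₀ u₂) :=
    (monotoneOn_sub_mul_of_concaveOn_of_hasDerivWithinAt hconc (right_mem_Icc.2 hu) hd₂).mono
      (subset_inter subset_rfl Icc_subset_Iic_self)
  simpa only [interval_average_eq, smul_eq_mul, one_div] using
    And.intro (le_slope_intervalAverage_of_monotoneOn h01 le_rfl h12 hmono)
      (slope_intervalAverage_le_of_antitoneOn h01 le_rfl h12 hanti)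
end
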